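/- arXiv:math/0405052 — 2 statements merged into one kernel-verified Lean document; each statement's English description precedes it below -/
import Mathlib

section
/- The invariant ring S[W'^*]^G is Cohen-Macaulay: there exists a homogeneous system of parameters f_1, …, f_6 of S[W'^*]^G such that S[W'^*]^G is a free module over the polynomial subalgebra F_2[f_1, …, f_6]. -/
set_option synthInstance.maxHeartbeats 1000000
set_option maxHeartbeats 1000000

open MvPolynomial

/-- The field with two elements. -/
abbrev F2 := ZMod 2

/-- `G = GL₃(𝔽₂)`. -/
abbrev G3 := GL (Fin 3) F2

/-- The generator `A` of `G`. -/
def Agen : G3 := ⟨!![1,0,1; 0,1,0; 0,0,1], !![1,0,1; 0,1,0; 0,0,1], by decide, by decide⟩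

/-- The generator `B` of `G`. -/
def Bgen : G3 := ⟨!![0,0,1; 1,0,0; 0,1,0], !![0,1,0; 0,0,1; 1,0,0], by decide, by decide⟩

/-- The matrix `D(A)` of the action on `W'^* = 𝔽₂⁶`. -/
def DA6 : Matrix (Fin 6) (Fin 6) F2 :=
  !![1,0,1,0,0,1; 0,1,0,0,0,0; 0,0,1,0,0,0; 0,0,0,1,1,0; 0,0,0,0,1,0; 0,0,0,0,0,1]

/-- The matrix `D(B)` of the action on `W'^* = 𝔽₂⁶`. -/
def DB6 : Matrix (Fin 6) (Fin 6) F2 :=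
  !![0,0,1,0,0,0; 1,0,0,0,0,0; 0,1,0,0,0,0; 0,0,0,0,0,1; 0,0,0,1,0,0; 0,0,0,0,1,0]

/-- The algebra endomorphism of `S[W'^*] = 𝔽₂[a,b,c,d,e,f]` induced by the right action of
`σ` on the linear forms (coefficient row vectors are multiplied on the right by `D σ`; in
particular the variable `Xᵢ` is sent to the linear form given by the `i`-th row of `D σ`). -/
noncomputable def polyAct (D : G3 →* GL (Fin 6) F2) (σ : G3) :
    MvPolynomial (Fin 6) F2 →ₐ[F2] MvPolynomial (Fin 6) F2 :=
  aeval (fun i => ∑ j, (D σ : Matrix (Fin 6) (Fin 6) F2) i j • X j)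

/-- The invariant ring `S[W'^*]^H` for a subgroup `H ≤ G`. -/
noncomputable def invH (D : G3 →* GL (Fin 6) F2) (H : Subgroup G3) :
    Subalgebra F2 (MvPolynomial (Fin 6) F2) where
  carrier := {p | ∀ σ ∈ H, polyAct D σ p = p}
  mul_mem' := fun ha hb σ hσ => by rw [map_mul, ha σ hσ, hb σ hσ]
  add_mem' := fun ha hb σ hσ => by rw [map_add, ha σ hσ, hb σ hσ]
  one_mem' := fun σ _ => map_one _
  zero_mem' := fun σ _ => map_zero _
  algebraMap_mem' := fun r σ _ => AlgHom.commutes _ r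

/-- The invariant ring `S[W'^*]^G`. -/
noncomputable def invG (D : G3 →* GL (Fin 6) F2) :
    Subalgebra F2 (MvPolynomial (Fin 6) F2) :=
  invH D ⊤


namespace CM

abbrev I7 := Fin 3 ⊕ Fin 4
abbrev S6 := MvPolynomial (Fin 6) F2
abbrev P7 := Equiv.Perm I7

lemma two_eq : (2 : S6) = 0 := CharTwo.two_eq_zero

/-- the seven permuted linear forms -/
noncomputable def y : I7 → S6 :=
  Sum.elim ![X 1 + X 2 + X 4, X 0 + X 2 + X 5, X 0 + X 1 + X 3]
    ![X 2, X 1, X 0, X 0 + X 1 + X 2 + X 3 + X 4 + X 5]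

lemma y_l0 : y (.inl 0) = X 1 + X 2 + X 4 := rfl
lemma y_l1 : y (.inl 1) = X 0 + X 2 + X 5 := rfl
lemma y_l2 : y (.inl 2) = X 0 + X 1 + X 3 := rfl
lemma y_r0 : y (.inr 0) = X 2 := rfl
lemma y_r1 : y (.inr 1) = X 1 := rfl
lemma y_r2 : y (.inr 2) = X 0 := rfl
lemma y_r3 : y (.inr 3) = X 0 + X 1 + X 2 + X 3 + X 4 + X 5 := rfl

lemma sum_y : ∑ i, y i = 0 := by
  simp only [Fintype.sum_sum_type, Fin.sum_univ_succ, Fin.sum_univ_zero]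
  simp only [y, Sum.elim_inl, Sum.elim_inr, Matrix.cons_val_zero, Matrix.cons_val_succ]
  linear_combination (2 * X 0 + 2 * X 1 + 2 * X 2 + X 3 + X 4 + X 5) * two_eq

/-- the six variables in terms of the `y`, for an arbitrary system -/
def xs {R : Type*} [CommRing R] (v : I7 → R) : Fin 6 → R :=
  ![v (.inr 2), v (.inr 1), v (.inr 0), v (.inl 2) + v (.inr 2) + v (.inr 1),
    v (.inl 0) + v (.inr 1) + v (.inr 0), v (.inl 1) + v (.inr 2) + v (.inr 0)]

lemma xs_y (k : Fin 6) : xs y k = X k := by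
  fin_cases k <;> simp [xs, y]
  · linear_combination (X 0 + X 1) * two_eq
  · linear_combination (X 1 + X 2) * two_eq
  · linear_combination (X 0 + X 2) * two_eq

lemma map_xs {R T : Type*} [CommRing R] [CommRing T] (φ : R →+* T) (v : I7 → R) (k : Fin 6) :
    φ (xs v k) = xs (fun i => φ (v i)) k := by
  fin_cases k <;> simp [xs]

/-- evaluation of `S6` at a system of seven elements of sum zero -/
noncomputable def ev {R : Type*} [CommRing R] [Algebra F2 R] (v : I7 → R) : S6 →ₐ[F2] R :=
  aeval (xs v)

lemma ev_y {R : Type*} [CommRing R] [Algebra F2 R] (v : I7 → R) (hv : ∑ i, v i = 0) (i : I7) :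
    ev v (y i) = v i := by
  have h2 : (2 : R) = 0 := by
    have := congrArg (algebraMap F2 R) (show (2 : F2) = 0 by decide)
    rwa [map_ofNat, map_zero] at this
  simp only [Fintype.sum_sum_type, Fin.sum_univ_succ, Fin.sum_univ_zero] at hv
  have e : ∀ k, ev v (X k) = xs v k := fun k => by simp [ev]
  rcases i with i | i <;> fin_cases i <;> simp [y, e] <;> simp [xs]
  · linear_combination (v (.inr 1) + v (.inr 0)) * h2
  · linear_combination (v (.inr 2) + v (.inr 0)) * h2
  · linear_combination (v (.inr 2) + v (.inr 1)) * h2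
  · simp at hv
    linear_combination hv + (v (.inr 0) + v (.inr 1) + v (.inr 2) - v (.inr 3)) * h2

lemma hom_ext {R : Type*} [CommRing R] [Algebra F2 R] {φ ψ : S6 →ₐ[F2] R}
    (h : ∀ i, φ (y i) = ψ (y i)) : φ = ψ := by
  apply MvPolynomial.algHom_ext
  intro k
  have h1 := map_xs (φ : S6 →+* R) y k
  have h2 := map_xs (ψ : S6 →+* R) y k
  rw [xs_y] at h1 h2
  simp only [RingHom.coe_coe] at h1 h2
  rw [h1, h2]
  simp [h]

noncomputable def act (σ : P7) : S6 →ₐ[F2] S6 := ev (fun i => y (σ i))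

lemma act_y (σ : P7) (i : I7) : act σ (y i) = y (σ i) := by
  apply ev_y
  rw [Equiv.sum_comp σ y, sum_y]

lemma act_mul (σ τ : P7) (s : S6) : act (σ * τ) s = act σ (act τ s) := by
  have : act (σ * τ) = (act σ).comp (act τ) := hom_ext (fun i => by simp [act_y])
  rw [this]; rfl

lemma act_one (s : S6) : act 1 s = s := by
  have : act 1 = AlgHom.id F2 S6 := hom_ext (fun i => by simp [act_y])
  rw [this]; rfl

lemma adjoin_y : Algebra.adjoin F2 (Set.range y) = ⊤ := by
  rw [eq_top_iff, ← MvPolynomial.adjoin_range_X, Algebra.adjoin_le_iff]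
  rintro _ ⟨k, rfl⟩
  have hy : ∀ i, y i ∈ Algebra.adjoin F2 (Set.range y) := fun i =>
    Algebra.subset_adjoin ⟨i, rfl⟩
  rw [← xs_y k]
  fin_cases k
  · exact hy (.inr 2)
  · exact hy (.inr 1)
  · exact hy (.inr 0)
  · exact add_mem (add_mem (hy _) (hy _)) (hy _)
  · exact add_mem (add_mem (hy _) (hy _)) (hy _)
  · exact add_mem (add_mem (hy _) (hy _)) (hy _)

/-- a transposition acts trivially modulo the corresponding form -/
lemma swap_congr (i j : I7) (s : S6) : (y i + y j) ∣ act (Equiv.swap i j) s + s := by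
  have hs : s ∈ Algebra.adjoin F2 (Set.range y) := by rw [adjoin_y]; trivial
  induction hs using Algebra.adjoin_induction with
  | mem x hx =>
    obtain ⟨k, rfl⟩ := hx
    rw [act_y]
    by_cases h1 : k = i
    · subst h1; rw [Equiv.swap_apply_left, add_comm]
    by_cases h2 : k = j
    · subst h2; rw [Equiv.swap_apply_right]
    rw [Equiv.swap_apply_of_ne_of_ne h1 h2, CharTwo.add_self_eq_zero]
    exact dvd_zero _
  | algebraMap r =>
    rw [AlgHom.commutes, CharTwo.add_self_eq_zero]; exact dvd_zero _
  | add a b _ _ ha hb =>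
    rw [map_add]
    have := dvd_add ha hb
    convert this using 1; ring
  | mul a b _ _ ha hb =>
    rw [map_mul]
    have := dvd_add (dvd_mul_of_dvd_left ha (act (Equiv.swap i j) b)) (dvd_mul_of_dvd_left hb a)
    convert this using 1
    linear_combination -(a * (act (Equiv.swap i j)) b) * two_eq

/-- linear order on points -/
def rk : I7 → ℕ := Sum.elim (fun i => i.val) (fun j => j.val + 3)

lemma rk_inj : Function.Injective rk := by
  intro a b; revert a b; decide

def PP : Finset (I7 × I7) := Finset.univ.filter (fun p => rk p.1 < rk p.2)

end CM

namespace CM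

/-- coefficient table of `y` -/
def my : I7 → Fin 6 → F2 :=
  Sum.elim ![![0,1,1,0,1,0], ![1,0,1,0,0,1], ![1,1,0,1,0,0]]
    ![![0,0,1,0,0,0], ![0,1,0,0,0,0], ![1,0,0,0,0,0], ![1,1,1,1,1,1]]

lemma eval_y (i : I7) (k : Fin 6) : eval (Pi.single k 1) (y i) = my i k := by
  rcases i with i | i <;> fin_cases i <;> fin_cases k <;> simp [y, my] <;> rfl

lemma y_hom (i : I7) : (y i).IsHomogeneous 1 := by
  have h := fun k : Fin 6 => isHomogeneous_X F2 k
  rcases i with i | i <;> fin_cases i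
  · exact ((h _).add (h _)).add (h _)
  · exact ((h _).add (h _)).add (h _)
  · exact ((h _).add (h _)).add (h _)
  · exact h 2
  · exact h 1
  · exact h 0
  · exact (((((h _).add (h _)).add (h _)).add (h _)).add (h _)).add (h _)

/-- the difference forms -/
noncomputable def dl (p : I7 × I7) : S6 := y p.1 + y p.2

lemma dl_eval (p : I7 × I7) (k : Fin 6) :
    eval (Pi.single k 1) (dl p) = my p.1 k + my p.2 k := by
  rw [dl, map_add, eval_y, eval_y]

lemma my_ne : ∀ p ∈ PP, ∃ k, my p.1 k + my p.2 k ≠ 0 := by decide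

lemma my_ne' : ∀ p ∈ PP, ∀ q ∈ PP, p ≠ q → ∃ k, my p.1 k + my p.2 k ≠ my q.1 k + my q.2 k := by
  decide +kernel

lemma dl_ne {p} (hp : p ∈ PP) : dl p ≠ 0 := by
  obtain ⟨k, hk⟩ := my_ne p hp
  intro h
  rw [← dl_eval, h, map_zero] at hk
  exact hk rfl

lemma dl_irr {p} (hp : p ∈ PP) : Irreducible (dl p) := by
  apply irreducible_of_totalDegree_eq_one
  · exact ((y_hom _).add (y_hom _)).totalDegree (dl_ne hp)
  · intro x hx
    by_contra h
    have hx0 : x = 0 := by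
      by_contra h'
      exact h (Ne.isUnit h')
    apply dl_ne hp
    ext m
    have := hx m
    rw [hx0, zero_dvd_iff] at this
    simpa using this

lemma dl_rel {p q} (hp : p ∈ PP) (hq : q ∈ PP) (hpq : p ≠ q) : IsRelPrime (dl p) (dl q) := by
  rw [(dl_irr hp).isRelPrime_iff_not_dvd, (dl_irr hp).dvd_irreducible_iff_associated (dl_irr hq)]
  rintro ⟨u, hu⟩
  obtain ⟨r, hr, hr'⟩ := MvPolynomial.isUnit_iff_eq_C_of_isReduced.1 u.isUnit
  have : r = 1 := by
    have h0 := hr.ne_zero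
    revert h0; clear hr' hr; revert r; decide
  rw [hr', this, C_1, mul_one] at hu
  obtain ⟨k, hk⟩ := my_ne' p hp q hq hpq
  rw [← dl_eval, ← dl_eval, hu] at hk
  exact hk rfl

lemma prod_dvd {Q : Finset (I7 × I7)} (hQ : Q ⊆ PP) {g : S6} (h : ∀ p ∈ Q, dl p ∣ g) :
    ∏ p ∈ Q, dl p ∣ g :=
  Finset.prod_dvd_of_isRelPrime (fun _ hp _ hq hpq => dl_rel (hQ hp) (hQ hq) hpq) h

lemma prod_ne {Q : Finset (I7 × I7)} (hQ : Q ⊆ PP) : ∏ p ∈ Q, dl p ≠ 0 :=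
  Finset.prod_ne_zero_iff.2 fun _ hp => dl_ne (hQ hp)

/-- the traces of a function on a finite set stable under a fixed-point free pairing that is
trivial modulo `d` are divisible by `d` -/
lemma sum_dvd {T : Type*} [Fintype T] [DecidableEq T] (F : T → S6) (d : S6) (e : T → T)
    (he : ∀ t, e (e t) = t) (hne : ∀ t, e t ≠ t) (h : ∀ t, d ∣ F (e t) + F t) :
    d ∣ ∑ t, F t := by
  rw [← Ideal.Quotient.eq_zero_iff_dvd, map_sum]
  refine Finset.sum_involution (fun t _ => e t) ?_ (fun t _ _ => hne t) (fun _ _ => Finset.mem_univ _)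
    (fun t _ => he t)
  intro t _
  rw [← map_add, Ideal.Quotient.eq_zero_iff_dvd, add_comm]
  exact h t

end CM

namespace CM

/-- the pairs related by `E` -/
def PE (E : I7 → I7 → Prop) [DecidableRel E] : Finset (I7 × I7) := PP.filter fun p => E p.1 p.2

lemma mem_PE {E : I7 → I7 → Prop} [DecidableRel E] {p : I7 × I7} :
    p ∈ PE E ↔ rk p.1 < rk p.2 ∧ E p.1 p.2 := by
  simp [PE, PP]

lemma PE_sub (E : I7 → I7 → Prop) [DecidableRel E] : PE E ⊆ PP := Finset.filter_subset _ _

def srt (p : I7 × I7) : I7 × I7 := if rk p.1 < rk p.2 then p else (p.2, p.1)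

lemma srt_mem {E : I7 → I7 → Prop} [DecidableRel E] (hs : ∀ i j, E i j → E j i) (σ : P7)
    (hE : ∀ i j, E i j → E (σ i) (σ j)) {p : I7 × I7} (hp : p ∈ PE E) :
    srt (σ p.1, σ p.2) ∈ PE E := by
  rw [mem_PE] at hp ⊢
  have hne : σ p.1 ≠ σ p.2 := by
    intro h
    have := σ.injective h
    rw [this] at hp
    exact lt_irrefl _ hp.1
  have hne' : rk (σ p.1) ≠ rk (σ p.2) := fun h => hne (rk_inj h)
  unfold srt
  split_ifs with h
  · exact ⟨h, hE _ _ hp.2⟩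
  · refine ⟨?_, hs _ _ (hE _ _ hp.2)⟩
    simp at h ⊢
    omega

lemma srt_inv (σ τ : P7) (h : ∀ i, τ (σ i) = i) {p : I7 × I7} (hp : rk p.1 < rk p.2) :
    srt (τ (srt (σ p.1, σ p.2)).1, τ (srt (σ p.1, σ p.2)).2) = p := by
  obtain ⟨a, b⟩ := p
  simp only at hp
  by_cases h1 : rk (σ a) < rk (σ b)
  · simp [srt, h1, h, hp]
  · simp [srt, h1, h, hp.not_gt]

lemma prod_inv {E : I7 → I7 → Prop} [DecidableRel E] (hs : ∀ i j, E i j → E j i) (σ : P7)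
    (hE : ∀ i j, E i j ↔ E (σ i) (σ j)) :
    act σ (∏ p ∈ PE E, dl p) = ∏ p ∈ PE E, dl p := by
  rw [map_prod]
  refine Finset.prod_nbij' (fun p => srt (σ p.1, σ p.2)) (fun p => srt (σ⁻¹ p.1, σ⁻¹ p.2))
    ?_ ?_ ?_ ?_ ?_
  · intro p hp
    exact srt_mem hs σ (fun i j => (hE i j).1) hp
  · intro p hp
    exact srt_mem hs σ⁻¹ (fun i j h => (hE _ _).2 (by simpa using h)) hp
  · intro p hp
    exact srt_inv σ σ⁻¹ (by simp) (mem_PE.1 hp).1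
  · intro p hp
    exact srt_inv σ⁻¹ σ (by simp) (mem_PE.1 hp).1
  · intro p _
    unfold srt
    split_ifs <;> simp [dl, act_y, add_comm]

section
variable {A : Type*} [CommRing A] [Algebra A S6]

lemma divL {N : Type*} [AddCommGroup N] [Module A N] (T : N →ₗ[A] S6) {d : S6} (hd : d ≠ 0)
    (h : ∀ x, d ∣ T x) : ∃ U : N →ₗ[A] S6, ∀ x, d * U x = T x := by
  choose u hu using h
  refine ⟨{ toFun := u, map_add' := ?_, map_smul' := ?_ }, fun x => (hu x).symm⟩
  · intro a b
    apply mul_left_cancel₀ hd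
    rw [← hu, map_add, mul_add, ← hu, ← hu]
  · intro a b
    apply mul_left_cancel₀ hd
    rw [← hu, map_smul, RingHom.id_apply, mul_smul_comm, ← hu]

lemma toA (hA3 : Function.Injective (algebraMap A S6))
    (hA2 : ∀ s : S6, (∀ σ, act σ s = s) → ∃ a : A, algebraMap A S6 a = s)
    {N : Type*} [AddCommGroup N] [Module A N] (U : N →ₗ[A] S6)
    (h : ∀ x σ, act σ (U x) = U x) : ∃ V : N →ₗ[A] A, ∀ x, algebraMap A S6 (V x) = U x := by
  choose u hu using fun x => hA2 (U x) (h x)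
  refine ⟨{ toFun := u, map_add' := ?_, map_smul' := ?_ }, hu⟩
  · intro a b
    apply hA3
    rw [hu, map_add, map_add, hu, hu]
  · intro a b
    apply hA3
    rw [hu, map_smul, RingHom.id_apply, smul_eq_mul, map_mul, hu, Algebra.smul_def]

/-- `act σ` as an `A`-linear map -/
noncomputable def actL (hA1 : ∀ (σ : P7) (a : A), act σ (algebraMap A S6 a) = algebraMap A S6 a)
    (σ : P7) : S6 →ₗ[A] S6 where
  toFun := act σ
  map_add' := map_add _
  map_smul' a s := by
    rw [Algebra.smul_def, map_mul, hA1, RingHom.id_apply, Algebra.smul_def]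

lemma dvd_swap {i j : I7} {σ : P7} {f : S6} :
    (y i + y j) ∣ act (Equiv.swap i j * σ) f + act σ f := by
  rw [act_mul]
  exact swap_congr i j _

noncomputable def hT (T : Finset (I7 × I7)) : S6 := ∏ p ∈ T, y p.1
noncomputable def hT' (T : Finset (I7 × I7)) : S6 := ∏ p ∈ PP \ T, y p.2

lemma kernel7 (σ : P7) : ∑ T ∈ PP.powerset, hT T * act σ (hT' T) =
    if σ = 1 then ∏ p ∈ PP, dl p else 0 := by
  have : ∑ T ∈ PP.powerset, hT T * act σ (hT' T) = ∏ p ∈ PP, (y p.1 + y (σ p.2)) := by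
    rw [Finset.prod_add]
    simp [hT, hT', act_y]
  rw [this]
  split_ifs with h
  · subst h; rfl
  · have : ∃ j, rk (σ j) < rk j := by
      by_contra hc
      push Not at hc
      apply h
      have h1 : ∑ j, rk j = ∑ j, rk (σ j) := (Equiv.sum_comp σ rk).symm
      have h2 := (Finset.sum_eq_sum_iff_of_le (fun j _ => hc j)).1 h1
      ext1 j
      exact (rk_inj (h2 j (Finset.mem_univ _))).symm
    obtain ⟨j, hj⟩ := this
    apply Finset.prod_eq_zero (i := (σ j, j))
    · simpa [PP] using hj
    · exact CharTwo.add_self_eq_zero _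

lemma stage7 (hA1 : ∀ (σ : P7) (a : A), act σ (algebraMap A S6 a) = algebraMap A S6 a)
    (hA3 : Function.Injective (algebraMap A S6))
    (hA2 : ∀ s : S6, (∀ σ, act σ s = s) → ∃ a : A, algebraMap A S6 a = s) :
    ∃ τ : S6 →ₗ[A] A, ∀ s, ∑ T ∈ PP.powerset, τ (hT' T * s) • hT T = s := by
  have hE : PE (fun _ _ => True) = PP := by simp [PE]
  have h0 : ∏ p ∈ PP, dl p ≠ 0 := prod_ne (le_refl _)
  have hsym : ∀ σ, act σ (∏ p ∈ PP, dl p) = ∏ p ∈ PP, dl p := by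
    intro σ
    rw [← hE]
    exact prod_inv (by simp) σ (by simp)
  have hT : ∀ s, (∑ σ : P7, actL hA1 σ) s = ∑ σ : P7, act σ s := by
    intro s
    rw [LinearMap.sum_apply]; rfl
  obtain ⟨U, hU⟩ := divL (∑ σ : P7, actL hA1 σ) h0 (by
    intro s
    rw [hT]
    apply prod_dvd (le_refl _)
    intro p hp
    have hne : p.1 ≠ p.2 := by
      intro h
      simp [PP, h] at hp
    apply sum_dvd _ _ (fun σ => Equiv.swap p.1 p.2 * σ)
    · intro σ; simp [← mul_assoc]
    · intro σ h
      simp at h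
      exact hne h
    · intro σ; exact dvd_swap)
  obtain ⟨V, hV⟩ := toA hA3 hA2 U (by
    intro s σ
    apply mul_left_cancel₀ h0
    rw [hU, hT]
    nth_rewrite 1 [← hsym σ]
    rw [← map_mul, hU, hT, map_sum]
    simp_rw [← act_mul]
    exact Fintype.sum_equiv (Equiv.mulLeft σ) _ _ (fun _ => rfl))
  refine ⟨V, fun s => ?_⟩
  apply mul_left_cancel₀ h0
  rw [Finset.mul_sum]
  simp_rw [Algebra.smul_def, hV, ← mul_assoc, hU, hT, map_mul, Finset.sum_mul]
  rw [Finset.sum_comm]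
  have : ∀ σ : P7, ∑ T ∈ PP.powerset, act σ (hT' T) * act σ s * CM.hT T =
      if σ = 1 then (∏ p ∈ PP, dl p) * s else 0 := by
    intro σ
    have := kernel7 σ
    calc _ = (∑ T ∈ PP.powerset, CM.hT T * act σ (hT' T)) * act σ s := by
          rw [Finset.sum_mul]; exact Finset.sum_congr rfl (fun _ _ => by ring)
      _ = _ := by
          rw [this]
          split_ifs with h
          · subst h; rw [act_one]
          · simp
  simp_rw [this]
  simp
end

end CM

namespace CM

abbrev EK : I7 → I7 → Prop := fun i j => i.isLeft = j.isLeft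

abbrev kk (a : Equiv.Perm (Fin 3)) (b : Equiv.Perm (Fin 4)) : P7 := Equiv.Perm.sumCongr a b

noncomputable abbrev z (i : Fin 3) : S6 := y (.inl i)
noncomputable abbrev x (i : Fin 4) : S6 := y (.inr i)

noncomputable def dK : S6 := ∏ p ∈ PE EK, dl p

lemma dK_eq : dK = ((z 0 + z 1) * (z 0 + z 2) * (z 1 + z 2)) *
    ((x 0 + x 1) * (x 0 + x 2) * (x 0 + x 3) * (x 1 + x 2) * (x 1 + x 3) * (x 2 + x 3)) := by
  have : PE EK = {(.inl 0, .inl 1), (.inl 0, .inl 2), (.inl 1, .inl 2), (.inr 0, .inr 1),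
    (.inr 0, .inr 2), (.inr 0, .inr 3), (.inr 1, .inr 2), (.inr 1, .inr 3), (.inr 2, .inr 3)} := by
    decide
  rw [dK, this]
  repeat rw [Finset.prod_insert (by decide)]
  rw [Finset.prod_singleton]
  simp only [dl]
  ring

lemma dK_ne : dK ≠ 0 := prod_ne (PE_sub _)

lemma dK_inv (a b) : act (kk a b) dK = dK := by
  apply prod_inv
  · intro i j h; exact h.symm
  · rintro (i | i) (j | j) <;> simp [EK]

lemma sgn_smul {n : ℕ} (σ : Equiv.Perm (Fin n)) (s : S6) : Equiv.Perm.sign σ • s = s := by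
  rcases Int.units_eq_one_or (Equiv.Perm.sign σ) with h | h <;> rw [h]
  · simp
  · simp [Units.smul_def, CharTwo.neg_eq]

lemma vdm3 : ∑ a : Equiv.Perm (Fin 3), ∏ i, z (a i) ^ (i : ℕ) =
    (z 0 + z 1) * (z 0 + z 2) * (z 1 + z 2) := by
  have h := Matrix.det_vandermonde z
  rw [Matrix.det_apply] at h
  simp only [sgn_smul, Matrix.vandermonde_apply] at h
  rw [h]
  simp only [Fin.prod_univ_three, CharTwo.sub_eq_add]
  rw [show Finset.Ioi (0 : Fin 3) = {1, 2} by decide, show Finset.Ioi (1 : Fin 3) = {2} by decide,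
    show Finset.Ioi (2 : Fin 3) = ∅ by decide]
  rw [Finset.prod_insert (by decide)]
  simp only [Finset.prod_singleton, Finset.prod_empty]
  ring

lemma vdm4 : ∑ a : Equiv.Perm (Fin 4), ∏ i, x (a i) ^ (i : ℕ) =
    (x 0 + x 1) * (x 0 + x 2) * (x 0 + x 3) * (x 1 + x 2) * (x 1 + x 3) * (x 2 + x 3) := by
  have h := Matrix.det_vandermonde x
  rw [Matrix.det_apply] at h
  simp only [sgn_smul, Matrix.vandermonde_apply] at h
  rw [h]
  simp only [Fin.prod_univ_four, CharTwo.sub_eq_add]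
  rw [show Finset.Ioi (0 : Fin 4) = {1, 2, 3} by decide,
    show Finset.Ioi (1 : Fin 4) = {2, 3} by decide,
    show Finset.Ioi (2 : Fin 4) = {3} by decide, show Finset.Ioi (3 : Fin 4) = ∅ by decide]
  repeat rw [Finset.prod_insert (by decide)]
  simp only [Finset.prod_singleton, Finset.prod_empty]
  ring

noncomputable def th : S6 := (∏ i, z i ^ (i : ℕ)) * ∏ i, x i ^ (i : ℕ)

lemma trace_th : ∑ k : Equiv.Perm (Fin 3) × Equiv.Perm (Fin 4), act (kk k.1 k.2) th = dK := by
  rw [dK_eq, ← vdm3, ← vdm4, Finset.sum_mul_sum, Fintype.sum_prod_type]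
  simp [th, act_y]

/-- invariance under `S₃ × S₄` -/
def KInv (s : S6) : Prop := ∀ a b, act (kk a b) s = s

lemma kk_mul (a a' b b') : kk a b * kk a' b' = kk (a * a') (b * b') :=
  Equiv.Perm.sumCongr_mul _ _ _ _

lemma swap_l (i j : Fin 3) : Equiv.swap (Sum.inl i : I7) (Sum.inl j) = kk (Equiv.swap i j) 1 := by
  rw [kk, Equiv.Perm.sumCongr_swap_one]

lemma swap_r (i j : Fin 4) : Equiv.swap (Sum.inr i : I7) (Sum.inr j) = kk 1 (Equiv.swap i j) := by
  rw [kk, Equiv.Perm.sumCongr_one_swap]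

section
variable {A : Type*} [CommRing A] [Algebra A S6]

lemma stageK (hA1 : ∀ (σ : P7) (a : A), act σ (algebraMap A S6 a) = algebraMap A S6 a) :
    ∃ ρ : S6 →ₗ[A] S6, (∀ s, KInv (ρ s)) ∧ ∀ s, KInv s → ρ s = s := by
  let T : S6 →ₗ[A] S6 := (∑ k : Equiv.Perm (Fin 3) × Equiv.Perm (Fin 4), actL hA1 (kk k.1 k.2)) ∘ₗ
    (LinearMap.mulLeft A th)
  have hT : ∀ s, T s = ∑ k : Equiv.Perm (Fin 3) × Equiv.Perm (Fin 4), act (kk k.1 k.2) (th * s) := by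
    intro s
    simp only [T, LinearMap.comp_apply, LinearMap.sum_apply]; rfl
  obtain ⟨U, hU⟩ := divL T dK_ne (by
    intro s
    rw [hT]
    apply prod_dvd (PE_sub _)
    rintro ⟨i, j⟩ hp
    rw [mem_PE] at hp
    rcases i with i | i <;> rcases j with j | j
    · have hne : i ≠ j := by rintro rfl; exact lt_irrefl _ hp.1
      apply sum_dvd _ _ (fun k => (Equiv.swap i j * k.1, k.2))
      · intro σ; simp [← mul_assoc]
      · rintro ⟨a, b⟩ h
        simp at h
        exact hne h
      · rintro ⟨a, b⟩
        have := dvd_swap (i := .inl i) (j := .inl j) (σ := kk a b) (f := th * s)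
        rwa [swap_l, kk_mul, one_mul] at this
    · simp [EK] at hp
    · simp [EK] at hp
    · have hne : i ≠ j := by rintro rfl; exact lt_irrefl _ hp.1
      apply sum_dvd _ _ (fun k => (k.1, Equiv.swap i j * k.2))
      · intro σ; simp [← mul_assoc]
      · rintro ⟨a, b⟩ h
        simp at h
        exact hne h
      · rintro ⟨a, b⟩
        have := dvd_swap (i := .inr i) (j := .inr j) (σ := kk a b) (f := th * s)
        rwa [swap_r, kk_mul, one_mul] at this)
  refine ⟨U, ?_, ?_⟩
  · intro s a b
    apply mul_left_cancel₀ dK_ne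
    rw [hU, hT]
    nth_rewrite 1 [← dK_inv a b]
    rw [← map_mul, hU, hT, map_sum]
    simp_rw [← act_mul, kk_mul]
    exact Fintype.sum_equiv (Equiv.mulLeft ((a, b) : Equiv.Perm (Fin 3) × Equiv.Perm (Fin 4))) _ _
      (fun _ => rfl)
  · intro s hs
    apply mul_left_cancel₀ dK_ne
    rw [hU, hT]
    simp_rw [map_mul, hs _ _]
    rw [← Finset.sum_mul, trace_th]
end

end CM

namespace CM

section generic
variable {R : Type*} [CommRing R]

def uu (a b : ℕ) (w z : Fin 3 → R) : R := w 0 ^ a * z 0 ^ b + w 1 ^ a * z 1 ^ b + w 2 ^ a * z 2 ^ b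
def s1 (w : Fin 3 → R) : R := w 0 + w 1 + w 2
def s2 (w : Fin 3 → R) : R := w 0 * w 1 + w 0 * w 2 + w 1 * w 2
def c2 (w : Fin 3 → R) : R := w 0 ^ 2 + w 1 ^ 2 + w 2 ^ 2 + s2 w
def disc (w : Fin 3 → R) : R := (w 0 - w 1) * (w 0 - w 2) * (w 1 - w 2)
def vv (w z : Fin 3 → R) : R :=
  w 0 ^ 2 * w 1 * z 0 ^ 2 * z 1 + w 0 ^ 2 * w 2 * z 0 ^ 2 * z 2 + w 1 ^ 2 * w 0 * z 1 ^ 2 * z 0 +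
  w 1 ^ 2 * w 2 * z 1 ^ 2 * z 2 + w 2 ^ 2 * w 0 * z 2 ^ 2 * z 0 + w 2 ^ 2 * w 1 * z 2 ^ 2 * z 1
def vp (w z : Fin 3 → R) : R :=
  vv w z - s1 w * s1 z * uu 2 2 w z - (c2 w * c2 z + s2 w * s2 z) * uu 1 1 w z +
    s1 w * c2 z * uu 2 1 w z + c2 w * s1 z * uu 1 2 w z
def vq (w z : Fin 3 → R) : R :=
  disc w * disc z - vp w z - (uu 1 1 w z * uu 2 2 w z + uu 1 1 w z * uu 2 2 w z) +
    (uu 1 2 w z * uu 2 1 w z + uu 1 2 w z * uu 2 1 w z)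

/-- the secondary invariants and their duals -/
def hh (w z : Fin 3 → R) : Fin 6 → R :=
  ![1, vq w z, uu 1 1 w z, uu 2 2 w z, - uu 1 2 w z, - uu 2 1 w z]
def hd (w z : Fin 3 → R) : Fin 6 → R :=
  ![vp w z, 1, uu 2 2 w z, uu 1 1 w z, uu 2 1 w z, uu 1 2 w z]

lemma map_hh {T : Type*} [CommRing T] (φ : R →+* T) (w z : Fin 3 → R) (j : Fin 6) :
    φ (hh w z j) = hh (fun i => φ (w i)) (fun i => φ (z i)) j := by
  fin_cases j <;> simp [hh, vq, uu, vp, disc, vv, s1, s2, c2]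

lemma map_hd {T : Type*} [CommRing T] (φ : R →+* T) (w z : Fin 3 → R) (j : Fin 6) :
    φ (hd w z j) = hd (fun i => φ (w i)) (fun i => φ (z i)) j := by
  fin_cases j <;> simp [hd, vq, uu, vp, disc, vv, s1, s2, c2]

lemma perm3 : ∀ σ : Equiv.Perm (Fin 3), σ = 1 ∨ (σ ≠ 1 ∧ (
    (σ 0 = 0 ∧ σ 1 = 2 ∧ σ 2 = 1) ∨ (σ 0 = 1 ∧ σ 1 = 0 ∧ σ 2 = 2) ∨ (σ 0 = 2 ∧ σ 1 = 1 ∧ σ 2 = 0) ∨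
    (σ 0 = 1 ∧ σ 1 = 2 ∧ σ 2 = 0) ∨ (σ 0 = 2 ∧ σ 1 = 0 ∧ σ 2 = 1))) := by decide

lemma kernel3 (w z : Fin 3 → R) (σ : Equiv.Perm (Fin 3)) :
    ∑ j, hh w z j * hd w (fun i => z (σ i)) j = if σ = 1 then disc w * disc z else 0 := by
  have e : ∀ z' : Fin 3 → R, ∑ j, hh w z j * hd w z' j =
      vp w z' + vq w z + uu 1 1 w z * uu 2 2 w z' + uu 2 2 w z * uu 1 1 w z' -
      uu 1 2 w z * uu 2 1 w z' - uu 2 1 w z * uu 1 2 w z' := by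
    intro z'
    simp [Fin.sum_univ_succ, hh, hd]
    ring
  rw [e]
  rcases perm3 σ with h | ⟨h, h'⟩
  · subst h
    rw [if_pos rfl]
    simp only [Equiv.Perm.one_apply, vq]
    ring
  · rw [if_neg h]
    rcases h' with ⟨h0, h1, h2⟩ | ⟨h0, h1, h2⟩ | ⟨h0, h1, h2⟩ | ⟨h0, h1, h2⟩ | ⟨h0, h1, h2⟩ <;>
    · simp only [vq, vp, uu, disc, vv, s1, s2, c2, h0, h1, h2]
      ring

def IsSw (s : Equiv.Perm (Fin 3)) : Prop :=
    (s 0 = 0 ∧ s 1 = 2 ∧ s 2 = 1) ∨ (s 0 = 1 ∧ s 1 = 0 ∧ s 2 = 2) ∨ (s 0 = 2 ∧ s 1 = 1 ∧ s 2 = 0)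

instance (s) : Decidable (IsSw s) := by unfold IsSw; infer_instance

lemma vp_sw (w z : Fin 3 → R) {s : Equiv.Perm (Fin 3)} (hs : IsSw s) :
    vp (fun i => w (s i)) (fun i => z (s i)) = vp w z := by
  rcases hs with ⟨h0, h1, h2⟩ | ⟨h0, h1, h2⟩ | ⟨h0, h1, h2⟩ <;>
  · simp only [vp, uu, vv, s1, s2, c2, h0, h1, h2]
    ring

lemma uu_sw (a b : ℕ) (w z : Fin 3 → R) {s : Equiv.Perm (Fin 3)} (hs : IsSw s) :
    uu a b (fun i => w (s i)) (fun i => z (s i)) = uu a b w z := by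
  rcases hs with ⟨h0, h1, h2⟩ | ⟨h0, h1, h2⟩ | ⟨h0, h1, h2⟩ <;>
  · simp only [uu, h0, h1, h2]
    ring

lemma vq_sw (w z : Fin 3 → R) {s : Equiv.Perm (Fin 3)} (hs : IsSw s) :
    vq (fun i => w (s i)) (fun i => z (s i)) = vq w z := by
  simp only [vq, vp_sw w z hs, uu_sw _ _ w z hs]
  rcases hs with ⟨h0, h1, h2⟩ | ⟨h0, h1, h2⟩ | ⟨h0, h1, h2⟩ <;>
  · simp only [disc, h0, h1, h2]
    ring

lemma hh_sw (w z : Fin 3 → R) {s : Equiv.Perm (Fin 3)} (hs : IsSw s) (j : Fin 6) :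
    hh (fun i => w (s i)) (fun i => z (s i)) j = hh w z j := by
  simp only [hh, vq_sw w z hs, uu_sw _ _ w z hs]

lemma hd_sw (w z : Fin 3 → R) {s : Equiv.Perm (Fin 3)} (hs : IsSw s) (j : Fin 6) :
    hd (fun i => w (s i)) (fun i => z (s i)) j = hd w z j := by
  simp only [hd, vp_sw w z hs, uu_sw _ _ w z hs]

end generic

noncomputable def w : Fin 3 → S6 :=
  ![x 0 * x 1 + x 2 * x 3, x 0 * x 2 + x 1 * x 3, x 0 * x 3 + x 1 * x 2]

lemma disc_eq : disc w * disc z = dK := by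
  rw [dK_eq]
  simp only [disc, CharTwo.sub_eq_add]
  simp [w]
  ring

/-- the quotient map `S₄ → S₃` on transpositions -/
def qs : Fin 4 → Fin 4 → Equiv.Perm (Fin 3) :=
  ![![1, Equiv.swap 1 2, Equiv.swap 0 2, Equiv.swap 0 1],
    ![Equiv.swap 1 2, 1, Equiv.swap 0 1, Equiv.swap 0 2],
    ![Equiv.swap 0 2, Equiv.swap 0 1, 1, Equiv.swap 1 2],
    ![Equiv.swap 0 1, Equiv.swap 0 2, Equiv.swap 1 2, 1]]

lemma qs_sw : ∀ i j, i ≠ j → IsSw (qs i j) := by decide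
lemma qs_mul : ∀ i j, qs i j * qs i j = 1 := by decide
lemma qs_ne : ∀ i j, i ≠ j → qs i j ≠ 1 := by decide

abbrev tt (i j : Fin 4) : P7 := kk (qs i j) (Equiv.swap i j)

lemma act_z (a b i) : act (kk a b) (z i) = z (a i) := act_y _ _
lemma act_x (a b i) : act (kk a b) (x i) = x (b i) := act_y _ _

lemma tt_z (i j : Fin 4) (k : Fin 3) : act (tt i j) (z k) = z (qs i j k) := act_z _ _ _

lemma kk1_w (a : Equiv.Perm (Fin 3)) (k : Fin 3) : act (kk a 1) (w k) = w k := by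
  fin_cases k <;> simp [w, act_y]

lemma tt_w (i j : Fin 4) (hij : i ≠ j) (k : Fin 3) : act (tt i j) (w k) = w (qs i j k) := by
  have h : ∀ b : Equiv.Perm (Fin 4), act (kk (qs i j) b) (w k) =
    (![x (b 0) * x (b 1) + x (b 2) * x (b 3), x (b 0) * x (b 2) + x (b 1) * x (b 3),
      x (b 0) * x (b 3) + x (b 1) * x (b 2)] : Fin 3 → S6) k := by
    intro b
    fin_cases k <;> simp [w, act_y]
  rw [tt, h]
  fin_cases i <;> fin_cases j <;> first | exact absurd rfl hij | skip
  all_goals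
    fin_cases k <;> simp [w, qs, Equiv.swap_apply_def] <;> ring

/-- invariance under `S₄` -/
def HInv (s : S6) : Prop := ∀ i j, i ≠ j → act (tt i j) s = s

lemma HInv.mul {s t : S6} (hs : HInv s) (ht : HInv t) : HInv (s * t) := fun i j h => by
  rw [map_mul, hs i j h, ht i j h]

lemma KInv.hInv {s : S6} (hs : KInv s) : HInv s := fun _ _ _ => hs _ _

lemma hh_inv (k : Fin 6) : HInv (hh w z k) := fun i j hij => by
  have := map_hh (act (tt i j) : S6 →+* S6) w z k
  simp only [RingHom.coe_coe, tt_z, tt_w i j hij] at this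
  rw [this, hh_sw w z (qs_sw i j hij)]

lemma hd_inv (k : Fin 6) : HInv (hd w z k) := fun i j hij => by
  have := map_hd (act (tt i j) : S6 →+* S6) w z k
  simp only [RingHom.coe_coe, tt_z, tt_w i j hij] at this
  rw [this, hd_sw w z (qs_sw i j hij)]

lemma kernelH (σ : Equiv.Perm (Fin 3)) : ∑ j, hh w z j * act (kk σ 1) (hd w z j) =
    if σ = 1 then dK else 0 := by
  rw [← disc_eq, ← kernel3]
  refine Finset.sum_congr rfl fun j _ => ?_
  have := map_hd (act (kk σ 1) : S6 →+* S6) w z j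
  simp only [RingHom.coe_coe, act_z, kk1_w] at this
  rw [this]

lemma HInv.swap {g : S6} (hg : HInv g) {i j : Fin 4} (h : i ≠ j) (σ : Equiv.Perm (Fin 3)) :
    act (kk 1 (Equiv.swap i j)) (act (kk σ 1) g) = act (kk (σ * qs i j) 1) g := by
  nth_rewrite 1 [← hg i j h]
  rw [← act_mul, ← act_mul, tt, kk_mul, kk_mul]
  simp

end CM

namespace CM

section
variable {A : Type*} [CommRing A] [Algebra A S6]

/-- the `S₄`-invariants as a submodule -/
def LH (hA1 : ∀ (σ : P7) (a : A), act σ (algebraMap A S6 a) = algebraMap A S6 a) :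
    Submodule A S6 where
  carrier := {s | HInv s}
  add_mem' := fun ha hb i j h => by rw [map_add, ha i j h, hb i j h]
  zero_mem' := fun i j h => map_zero _
  smul_mem' := fun a s hs i j h => by
    rw [Algebra.smul_def, map_mul, hA1, hs i j h]


lemma HInv.dvd_sum {g : S6} (hg : HInv g) :
    dK ∣ ∑ σ : Equiv.Perm (Fin 3), act (kk σ 1) g := by
  apply prod_dvd (PE_sub _)
  rintro ⟨i, j⟩ hp
  rw [mem_PE] at hp
  rcases i with i | i <;> rcases j with j | j
  · have hne : i ≠ j := by rintro rfl; exact lt_irrefl _ hp.1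
    apply sum_dvd _ _ (fun σ => Equiv.swap i j * σ)
    · intro σ; simp [← mul_assoc]
    · intro σ h
      simp at h
      exact hne h
    · intro σ
      have := dvd_swap (i := .inl i) (j := .inl j) (σ := kk σ 1) (f := g)
      rwa [swap_l, kk_mul, one_mul] at this
  · simp [EK] at hp
  · simp [EK] at hp
  · have hne : i ≠ j := by rintro rfl; exact lt_irrefl _ hp.1
    apply sum_dvd _ _ (fun σ => σ * qs i j)
    · intro σ; simp [mul_assoc, qs_mul]
    · intro σ h
      exact qs_ne i j hne (by simpa using h)
    · intro σ
      have := swap_congr (.inr i) (.inr j) (act (kk σ 1) g)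
      rwa [swap_r, hg.swap hne] at this

lemma sum_left (g : S6) (a : Equiv.Perm (Fin 3)) :
    act (kk a 1) (∑ σ : Equiv.Perm (Fin 3), act (kk σ 1) g) =
      ∑ σ : Equiv.Perm (Fin 3), act (kk σ 1) g := by
  rw [map_sum, ← Equiv.sum_comp (Equiv.mulLeft a) (fun σ => act (kk σ 1) g)]
  refine Finset.sum_congr rfl fun σ _ => ?_
  rw [← act_mul, kk_mul, one_mul, Equiv.coe_mulLeft]

lemma HInv.sum_right {g : S6} (hg : HInv g) {i j : Fin 4} (h : i ≠ j) :
    act (kk 1 (Equiv.swap i j)) (∑ σ : Equiv.Perm (Fin 3), act (kk σ 1) g) =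
      ∑ σ : Equiv.Perm (Fin 3), act (kk σ 1) g := by
  rw [map_sum, ← Equiv.sum_comp (Equiv.mulRight (qs i j)) (fun σ => act (kk σ 1) g)]
  refine Finset.sum_congr rfl fun σ _ => ?_
  rw [hg.swap h, Equiv.coe_mulRight]

lemma HInv.kInv_of {g u : S6} (hg : HInv g)
    (hu : dK * u = ∑ σ : Equiv.Perm (Fin 3), act (kk σ 1) g) : KInv u := by
  have key : ∀ π : P7, act π dK = dK → act π (dK * u) = dK * u → act π u = u := by
    intro π h1 h2
    rw [map_mul, h1] at h2
    exact mul_left_cancel₀ dK_ne h2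
  intro a b
  have hl : act (kk a 1) u = u := by
    apply key _ (dK_inv _ _)
    rw [hu, sum_left]
  have hr : act (kk 1 b) u = u := by
    induction b using Equiv.Perm.swap_induction_on with
    | one =>
      rw [show kk 1 1 = 1 from Equiv.Perm.sumCongr_one, act_one]
    | swap_mul b i j hij ih =>
      rw [← one_mul (1 : Equiv.Perm (Fin 3)), ← kk_mul, act_mul, ih]
      apply key _ (dK_inv _ _)
      rw [hu, hg.sum_right hij]
  rw [← mul_one a, ← one_mul b, ← kk_mul, act_mul, hr, hl]

lemma recon (f : S6) (u : Fin 6 → S6)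
    (hu : ∀ k, dK * u k = ∑ σ : Equiv.Perm (Fin 3), act (kk σ 1) (hd w z k * f)) :
    ∑ k, hh w z k * u k = f := by
  apply mul_left_cancel₀ dK_ne
  rw [Finset.mul_sum]
  have : ∀ k, dK * (hh w z k * u k) =
      ∑ σ : Equiv.Perm (Fin 3), (hh w z k * act (kk σ 1) (hd w z k)) * act (kk σ 1) f := by
    intro k
    rw [mul_left_comm, hu, Finset.mul_sum]
    refine Finset.sum_congr rfl fun σ _ => ?_
    rw [map_mul, mul_assoc]
  rw [Finset.sum_congr rfl fun k _ => this k, Finset.sum_comm]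
  have h2 : ∀ σ : Equiv.Perm (Fin 3),
      ∑ k, (hh w z k * act (kk σ 1) (hd w z k)) * act (kk σ 1) f =
      if σ = 1 then dK * f else 0 := by
    intro σ
    rw [← Finset.sum_mul, kernelH]
    split_ifs with h
    · rw [h, show kk 1 1 = 1 from Equiv.Perm.sumCongr_one, act_one]
    · rw [zero_mul]
  rw [Finset.sum_congr rfl fun σ _ => h2 σ, Finset.sum_ite_eq' Finset.univ (1 : Equiv.Perm (Fin 3)),
    if_pos (Finset.mem_univ _)]

lemma stageH (hA1 : ∀ (σ : P7) (a : A), act σ (algebraMap A S6 a) = algebraMap A S6 a) :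
    ∃ γ : Fin 6 → (LH hA1 →ₗ[A] S6), (∀ k f, KInv (γ k f)) ∧
      ∀ f : LH hA1, ∑ k, hh w z k * γ k f = f := by
  have h1 : ∀ k, ∃ U : LH hA1 →ₗ[A] S6, ∀ f : LH hA1,
      dK * U f = ∑ σ : Equiv.Perm (Fin 3), act (kk σ 1) (hd w z k * f) := by
    intro k
    have hk := hd_inv k
    generalize hd w z k = g at hk
    have hT : ∀ f : LH hA1, ((∑ σ : Equiv.Perm (Fin 3), actL hA1 (kk σ 1)) ∘ₗ
      (LinearMap.mulLeft A g) ∘ₗ (LH hA1).subtype) f =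
        ∑ σ : Equiv.Perm (Fin 3), act (kk σ 1) (g * f) := by
      intro f
      simp only [LinearMap.comp_apply, LinearMap.sum_apply]; rfl
    obtain ⟨U, hU⟩ := divL ((∑ σ : Equiv.Perm (Fin 3), actL hA1 (kk σ 1)) ∘ₗ
      (LinearMap.mulLeft A g) ∘ₗ (LH hA1).subtype) dK_ne
      (fun f => by rw [hT]; exact (hk.mul f.2).dvd_sum)
    exact ⟨U, fun f => by rw [hU, hT]⟩
  choose γ hγ using h1
  exact ⟨γ, fun k f => ((hd_inv k).mul f.2).kInv_of (hγ k f), fun f => recon f _ fun k => hγ k f⟩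
end

end CM

namespace CM

def pA : P7 := Equiv.swap (.inl 1) (.inr 2) * Equiv.swap (.inl 2) (.inr 3)
def pB : P7 := kk (Equiv.swap 0 1 * Equiv.swap 0 2) (Equiv.swap 0 1 * Equiv.swap 1 2)
def cc : P7 := pA * pB

def wd (l : List Bool) : P7 := (l.map fun b => if b then pA else pB).prod

def tab : Fin 4 → Fin 4 → List Bool :=
  ![![[], [true, false, true, false, true, false, false, true, false, true, false, true, false], [true, false, true, false, true, false, false, true, false, true, false, true], [false, false, true, false, false, true, false, true, false]],
    ![[true, false, true, false, true, false, false, true, false, true, false, true, false], [], [false, true, false, true, false, true, false, false, true, false, true, false, true], [true, false, false, true, false, true]],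
    ![[true, false, true, false, true, false, false, true, false, true, false, true], [false, true, false, true, false, true, false, false, true, false, true, false, true], [], [false, true, false, false, true, false, true, false, false]],
    ![[false, false, true, false, false, true, false, true, false], [true, false, false, true, false, true], [false, true, false, false, true, false, true, false, false], []]]

lemma tt_wd : ∀ i j, i ≠ j → tt i j = wd (tab i j) := by decide +kernel

def jA : Fin 7 → Fin 7 := ![1, 0, 2, 6, 4, 5, 3]
def jB : Fin 7 → Fin 7 := ![0, 2, 6, 4, 5, 3, 1]
def lA : Fin 7 → List (Fin 4 × Fin 4) := ![[(0, 1), (0, 2)], [(0, 1), (1, 2)], [(0, 3)], [(0, 1), (0, 3), (1, 2)], [(0, 1)], [(0, 2), (1, 3)], [(0, 1), (0, 2), (1, 3)]]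
def lB : Fin 7 → List (Fin 4 × Fin 4) := ![[(0, 1), (1, 2)], [(0, 3)], [(0, 1), (0, 3), (1, 2)], [(0, 1)], [(0, 2), (1, 3)], [(0, 1), (0, 2), (1, 3)], [(0, 1), (0, 2)]]
lemma jA_bij : Function.Bijective jA := by decide
lemma jB_bij : Function.Bijective jB := by decide
lemma lA_ne : ∀ i, ∀ p ∈ lA i, p.1 ≠ p.2 := by decide
lemma lB_ne : ∀ i, ∀ p ∈ lB i, p.1 ≠ p.2 := by decide
lemma cA : ∀ i : Fin 7, pA * cc ^ (i : ℕ) =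
    cc ^ (jA i : ℕ) * ((lA i).map fun p => tt p.1 p.2).prod := by decide +kernel
lemma cB : ∀ i : Fin 7, pB * cc ^ (i : ℕ) =
    cc ^ (jB i : ℕ) * ((lB i).map fun p => tt p.1 p.2).prod := by decide +kernel

def GInv (f : S6) : Prop := act pA f = f ∧ act pB f = f

lemma GInv.wd {f : S6} (hf : GInv f) (l : List Bool) : act (wd l) f = f := by
  induction l with
  | nil => exact act_one f
  | cons b l ih =>
    rw [show CM.wd (b :: l) = (if b then pA else pB) * CM.wd l by simp [CM.wd], act_mul, ih]
    cases b
    · exact hf.2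
    · exact hf.1

lemma GInv.hInv {f : S6} (hf : GInv f) : HInv f := fun i j h => by rw [tt_wd i j h, hf.wd]

lemma GInv.cc_pow {f : S6} (hf : GInv f) (n : ℕ) : act (cc ^ n) f = f := by
  induction n with
  | zero => exact act_one f
  | succ n ih => rw [pow_succ, act_mul, cc, act_mul, hf.2, hf.1]; exact ih

lemma HInv.list {f : S6} (hf : HInv f) (l : List (Fin 4 × Fin 4)) (hl : ∀ p ∈ l, p.1 ≠ p.2) :
    act (l.map fun p => tt p.1 p.2).prod f = f := by
  induction l with
  | nil => exact act_one f
  | cons p l ih =>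
    rw [List.map_cons, List.prod_cons, act_mul, ih fun q hq => hl q (List.mem_cons_of_mem _ hq),
      hf _ _ (hl p List.mem_cons_self)]

noncomputable def tr (g : S6) : S6 := ∑ i : Fin 7, act (cc ^ (i : ℕ)) g

lemma HInv.tr {g : S6} (hg : HInv g) : GInv (tr g) := by
  constructor
  · rw [CM.tr, map_sum, ← jA_bij.sum_comp fun i : Fin 7 => act (cc ^ (i : ℕ)) g]
    refine Finset.sum_congr rfl fun i _ => ?_
    rw [← act_mul, cA, act_mul, hg.list _ (lA_ne i)]
  · rw [CM.tr, map_sum, ← jB_bij.sum_comp fun i : Fin 7 => act (cc ^ (i : ℕ)) g]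
    refine Finset.sum_congr rfl fun i _ => ?_
    rw [← act_mul, cB, act_mul, hg.list _ (lB_ne i)]

lemma GInv.tr_eq {f : S6} (hf : GInv f) : tr f = f := by
  rw [tr, Finset.sum_congr rfl fun (i : Fin 7) _ => hf.cc_pow (i : ℕ)]
  simp only [Finset.sum_const, Finset.card_univ, Fintype.card_fin]
  rw [nsmul_eq_mul]
  linear_combination (3 * f) * two_eq

section
variable {A : Type*} [CommRing A] [Algebra A S6]

lemma main_proj (hA1 : ∀ (σ : P7) (a : A), act σ (algebraMap A S6 a) = algebraMap A S6 a)
    (hA3 : Function.Injective (algebraMap A S6))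
    (hA2 : ∀ s, (∀ σ, act σ s = s) → ∃ a, algebraMap A S6 a = s)
    (M : Submodule A S6) (hM : ∀ f, f ∈ M ↔ GInv f) :
    Module.Projective A M ∧ Module.Finite A M := by
  obtain ⟨τ, hτ⟩ := stage7 hA1 hA3 hA2
  obtain ⟨ρ, hρ1, hρ2⟩ := stageK hA1
  obtain ⟨γ, hγ1, hγ2⟩ := stageH hA1
  generalize PP.powerset = Q at hτ
  have hle : M ≤ LH hA1 := fun f hf => ((hM f).1 hf).hInv
  let trL : S6 →ₗ[A] S6 := ∑ i : Fin 7, actL hA1 (cc ^ (i : ℕ))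
  have htr : ∀ g, trL g = tr g := by
    intro g
    simp only [trL, LinearMap.sum_apply, tr]; rfl
  let m : Fin 6 × Q → M := fun kT => ⟨trL (hh w z kT.1 * ρ (hT kT.2.1)), by
    rw [hM, htr]
    exact ((hh_inv _).mul (hρ1 _).hInv).tr⟩
  let Φ : M →ₗ[A] (Fin 6 × Q → A) := LinearMap.pi fun kT =>
    τ ∘ₗ LinearMap.mulLeft A (hT' kT.2.1) ∘ₗ γ kT.1 ∘ₗ Submodule.inclusion hle
  let Ψ : (Fin 6 × Q → A) →ₗ[A] M := Fintype.linearCombination A m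
  have hΦ : ∀ f kT, Φ f kT = τ (hT' kT.2.1 * γ kT.1 (Submodule.inclusion hle f)) :=
    fun f kT => rfl
  have hid : Ψ ∘ₗ Φ = LinearMap.id := by
    refine LinearMap.ext fun f => Subtype.ext ?_
    have hf : GInv f := (hM _).1 f.2
    simp only [LinearMap.comp_apply, LinearMap.id_apply, Ψ, Fintype.linearCombination_apply]
    rw [AddSubmonoidClass.coe_finsetSum, Fintype.sum_prod_type]
    simp only [hΦ, Submodule.coe_smul, m]
    have h1 : ∀ k : Fin 6, ∑ T : Q, τ (hT' T.1 * γ k (Submodule.inclusion hle f)) •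
        trL (hh w z k * ρ (hT T.1)) = trL (hh w z k * γ k (Submodule.inclusion hle f)) := by
      intro k
      have h3 := hγ1 k (Submodule.inclusion hle f)
      generalize γ k (Submodule.inclusion hle f) = s at h3
      have h2 : trL (hh w z k * ρ (∑ T ∈ Q, τ (hT' T * s) • hT T)) = trL (hh w z k * s) := by
        rw [hτ, hρ2 s h3]
      rw [← h2, map_sum, Finset.mul_sum, map_sum,
        Finset.sum_coe_sort Q (fun T => τ (hT' T * s) • trL (hh w z k * ρ (hT T)))]
      refine Finset.sum_congr rfl fun T _ => ?_
      rw [map_smul, mul_smul_comm, map_smul]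
    rw [Finset.sum_congr rfl fun k _ => h1 k, ← map_sum, hγ2, htr]
    exact hf.tr_eq
  refine ⟨Module.Projective.of_split Φ Ψ hid, ?_⟩
  exact Module.Finite.of_surjective Ψ fun f => ⟨Φ f, LinearMap.congr_fun hid f⟩
end

end CM

namespace CM

/-- the primary invariants -/
noncomputable def fe (i : Fin 6) : S6 := aeval y (esymm I7 F2 (i + 2))

lemma fe_hom (i : Fin 6) : (fe i).IsHomogeneous (i + 2) := by
  rw [fe, esymm, map_sum]
  refine IsHomogeneous.sum _ _ _ fun t ht => ?_
  rw [map_prod]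
  simp only [aeval_X]
  have := IsHomogeneous.prod t y (fun _ => 1) (fun i _ => y_hom i)
  rw [Finset.sum_const, smul_eq_mul, mul_one, (Finset.mem_powersetCard.1 ht).2] at this
  exact this

lemma act_aeval (σ : P7) (p : MvPolynomial I7 F2) : act σ (aeval y p) = aeval y (rename σ p) := by
  have : (act σ).comp (aeval y) = (aeval y).comp (rename σ) :=
    MvPolynomial.algHom_ext fun i => by simp [act_y]
  exact AlgHom.congr_fun this p

lemma act_fe (σ : P7) (i : Fin 6) : act σ (fe i) = fe i := by
  rw [fe, act_aeval, rename_esymm]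

/-- lift to the polynomial ring in seven variables -/
noncomputable def lft : S6 →ₐ[F2] MvPolynomial I7 F2 := ev fun i => X i + esymm I7 F2 1

lemma lft_y (i : I7) : lft (y i) = X i + esymm I7 F2 1 := by
  apply ev_y (fun i => X i + esymm I7 F2 1)
  rw [Finset.sum_add_distrib, ← esymm_one, Finset.sum_const, Finset.card_univ,
    show Fintype.card I7 = 7 from rfl, nsmul_eq_mul]
  have : (2 : MvPolynomial I7 F2) = 0 := CharTwo.two_eq_zero
  push_cast
  linear_combination (4 * esymm I7 F2 1) * this

lemma aeval_e1 : aeval y (esymm I7 F2 1) = (0 : S6) := by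
  rw [esymm_one, map_sum]; simp only [aeval_X]; exact sum_y

lemma aeval_lft (s : S6) : aeval y (lft s) = s := by
  have : (aeval y).comp lft = AlgHom.id F2 S6 := hom_ext fun i => by
    rw [AlgHom.comp_apply, lft_y, map_add, aeval_e1, aeval_X, add_zero]; rfl
  exact AlgHom.congr_fun this s

lemma rename_lft (σ : P7) (s : S6) : rename σ (lft s) = lft (act σ s) := by
  have : (rename σ).comp lft = lft.comp (act σ) := hom_ext fun i => by
    rw [AlgHom.comp_apply, lft_y, map_add, rename_esymm, rename_X, AlgHom.comp_apply, act_y, lft_y]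
  exact AlgHom.congr_fun this s

lemma fund (s : S6) (hs : ∀ σ, act σ s = s) : s ∈ Algebra.adjoin F2 (Set.range fe) := by
  have hsym : (lft s).IsSymmetric := fun σ => by rw [rename_lft, hs]
  obtain ⟨p, hp⟩ := esymmAlgHom_surjective F2 (σ := I7) (n := 7) le_rfl ⟨lft s, hsym⟩
  have h1 := esymmAlgHom_apply (σ := I7) p
  rw [hp] at h1
  have h2 : s = aeval (fun i : Fin 7 => aeval y (esymm I7 F2 (i + 1))) p := by
    conv_lhs => rw [← aeval_lft s]
    change aeval y ((⟨lft s, hsym⟩ : symmetricSubalgebra I7 F2) : MvPolynomial I7 F2) = _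
    rw [h1, MvPolynomial.comp_aeval_apply]
  rw [h2]
  have h3 : ∀ q : MvPolynomial (Fin 7) F2,
      aeval (fun i : Fin 7 => aeval y (esymm I7 F2 (i + 1))) q ∈
        Algebra.adjoin F2 (Set.range fe) := by
    intro q
    induction q using MvPolynomial.induction_on with
    | C a => rw [aeval_C]; exact Subalgebra.algebraMap_mem _ _
    | add a b ha hb => rw [map_add]; exact add_mem ha hb
    | mul_X a i ha =>
      rw [map_mul, aeval_X]
      refine mul_mem ha ?_
      induction i using Fin.cases with
      | zero =>
        simp only [Fin.val_zero, zero_add]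
        rw [aeval_e1]; exact zero_mem _
      | succ i => exact Algebra.subset_adjoin ⟨i, rfl⟩
  exact h3 p

end CM

namespace CM

/-- the parameter algebra -/
noncomputable abbrev AA : Subalgebra F2 S6 := Algebra.adjoin F2 (Set.range fe)

lemma AA1 (σ : P7) (a : AA) : act σ (algebraMap AA S6 a) = algebraMap AA S6 a := by
  obtain ⟨a, ha⟩ := a
  change act σ a = a
  have h : AA ≤ AlgHom.equalizer (act σ) (AlgHom.id F2 S6) := by
    rw [Algebra.adjoin_le_iff]
    rintro _ ⟨i, rfl⟩
    exact act_fe σ i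
  exact h ha

lemma AA3 : Function.Injective (algebraMap AA S6) := Subtype.val_injective

lemma AA2 (s : S6) (hs : ∀ σ, act σ s = s) : ∃ a : AA, algebraMap AA S6 a = s :=
  ⟨⟨s, fund s hs⟩, rfl⟩

lemma AA_fin : Module.Finite AA S6 := by
  obtain ⟨τ, hτ⟩ := stage7 AA1 AA3 AA2
  generalize PP.powerset = Q at hτ
  refine ⟨⟨Q.image hT, ?_⟩⟩
  rw [eq_top_iff]
  intro s _
  rw [← hτ s]
  refine Submodule.sum_mem _ fun T hT => Submodule.smul_mem _ _ (Submodule.subset_span ?_)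
  exact Finset.mem_coe.2 (Finset.mem_image_of_mem _ hT)

lemma fe_indep : AlgebraicIndependent F2 fe := by
  have := AA_fin
  have : Algebra.IsAlgebraic AA S6 := inferInstance
  refine (Algebra.IsAlgebraic.isTranscendenceBasis_of_le_trdeg_of_finite F2 fe ?_).1
  rw [MvPolynomial.trdeg_of_isDomain]
  simp

end CM

namespace CM

def wdG (l : List Bool) : G3 := (l.map fun b => if b then Agen else Bgen).prod

def tabG : Fin 3 → Fin 3 → List Bool :=
  ![![[], [true, false, false, true, false, true, false, false, true, false], [true]],
    ![[false, true, false, false], [], [true, false, true, false, false, true, false, true, false, false]],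
    ![[false, true, false, true, false, false, true, false, true, false], [false, false, true, false], []]]

lemma tabG_spec : ∀ i j, i ≠ j →
    ((wdG (tabG i j) : G3) : Matrix (Fin 3) (Fin 3) F2) = Matrix.transvection i j 1 := by
  decide +kernel

lemma wdG_append (l l' : List Bool) : wdG (l ++ l') = wdG l * wdG l' := by simp [wdG]

lemma gen_G (σ : G3) : ∃ l, wdG l = σ := by
  have key : ∃ l, ((wdG l : G3) : Matrix (Fin 3) (Fin 3) F2) = σ := by
    apply Matrix.diagonal_transvection_induction_of_det_ne_zero
      (fun M => ∃ l, ((wdG l : G3) : Matrix (Fin 3) (Fin 3) F2) = M)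
    · exact ((Matrix.isUnit_iff_isUnit_det _).1 σ.isUnit).ne_zero
    · intro d hd
      refine ⟨[], ?_⟩
      have h01 : ∀ a : F2, a ≠ 0 → a = 1 := by decide
      have : d = 1 := by
        funext i
        rw [Matrix.det_diagonal, Finset.prod_ne_zero_iff] at hd
        exact h01 _ (hd i (Finset.mem_univ _))
      rw [this]
      simp [wdG]
    · rintro ⟨i, j, hij, c⟩
      have h01 : ∀ a : F2, a = 0 ∨ a = 1 := by decide
      rcases h01 c with rfl | rfl
      · exact ⟨[], by simp [wdG, Matrix.TransvectionStruct.toMatrix]⟩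
      · exact ⟨tabG i j, tabG_spec i j hij⟩
    · rintro M N _ _ ⟨l, rfl⟩ ⟨l', rfl⟩
      exact ⟨l ++ l', by rw [wdG_append]; rfl⟩
  obtain ⟨l, hl⟩ := key
  exact ⟨l, Units.ext hl⟩

section
variable (D : G3 →* GL (Fin 6) F2)

lemma polyAct_X (σ : G3) (i : Fin 6) :
    polyAct D σ (X i) = ∑ j, (D σ : Matrix (Fin 6) (Fin 6) F2) i j • X j := by
  rw [polyAct, aeval_X]

lemma polyAct_mul (σ τ : G3) (f : S6) : polyAct D (σ * τ) f = polyAct D τ (polyAct D σ f) := by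
  have : polyAct D (σ * τ) = (polyAct D τ).comp (polyAct D σ) := by
    refine MvPolynomial.algHom_ext fun i => ?_
    rw [AlgHom.comp_apply, polyAct_X, polyAct_X, map_sum, map_mul, Units.val_mul]
    simp only [map_smul, polyAct_X, Finset.smul_sum, smul_smul, Matrix.mul_apply, Finset.sum_smul]
    rw [Finset.sum_comm]
  rw [this]; rfl

lemma polyAct_one (f : S6) : polyAct D 1 f = f := by
  have : polyAct D 1 = AlgHom.id F2 S6 := by
    refine MvPolynomial.algHom_ext fun i => ?_
    rw [polyAct_X, map_one, Units.val_one]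
    simp [Matrix.one_apply]
  rw [this]; rfl

lemma polyAct_A (hA : (D Agen : Matrix (Fin 6) (Fin 6) F2) = DA6) : polyAct D Agen = act pA := by
  refine hom_ext fun i => ?_
  have h0 : polyAct D Agen (X 0) = X 0 + X 2 + X 5 := by
    rw [polyAct_X, hA]; simp [DA6, Fin.sum_univ_succ, add_assoc]
  have h1 : polyAct D Agen (X 1) = X 1 := by
    rw [polyAct_X, hA]; simp [DA6, Fin.sum_univ_succ]
  have h2 : polyAct D Agen (X 2) = X 2 := by
    rw [polyAct_X, hA]; simp [DA6, Fin.sum_univ_succ]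
  have h3 : polyAct D Agen (X 3) = X 3 + X 4 := by
    rw [polyAct_X, hA]; simp [DA6, Fin.sum_univ_succ]
  have h4 : polyAct D Agen (X 4) = X 4 := by
    rw [polyAct_X, hA]; simp [DA6, Fin.sum_univ_succ]
  have h5 : polyAct D Agen (X 5) = X 5 := by
    rw [polyAct_X, hA]; simp [DA6, Fin.sum_univ_succ]
  rw [act_y]
  rcases i with i | i <;> fin_cases i
  · change _ = y (.inl 0)
    simp [y, h1, h2, h4]
  · change _ = y (.inr 2)
    simp [y, h0, h2, h5]
    linear_combination (X 2 + X 5) * two_eq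
  · change _ = y (.inr 3)
    simp [y, h0, h1, h3]
    ring
  · change _ = y (.inr 0)
    simp [y, h2]
  · change _ = y (.inr 1)
    simp [y, h1]
  · change _ = y (.inl 1)
    simp [y, h0]
  · change _ = y (.inl 2)
    simp [y, h0, h1, h2, h3, h4, h5]
    linear_combination (X 2 + X 5 + X 4) * two_eq

lemma polyAct_B (hB : (D Bgen : Matrix (Fin 6) (Fin 6) F2) = DB6) : polyAct D Bgen = act pB := by
  refine hom_ext fun i => ?_
  have h0 : polyAct D Bgen (X 0) = X 2 := by
    rw [polyAct_X, hB]; simp [DB6, Fin.sum_univ_succ]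
  have h1 : polyAct D Bgen (X 1) = X 0 := by
    rw [polyAct_X, hB]; simp [DB6, Fin.sum_univ_succ]
  have h2 : polyAct D Bgen (X 2) = X 1 := by
    rw [polyAct_X, hB]; simp [DB6, Fin.sum_univ_succ]
  have h3 : polyAct D Bgen (X 3) = X 5 := by
    rw [polyAct_X, hB]; simp [DB6, Fin.sum_univ_succ]
  have h4 : polyAct D Bgen (X 4) = X 3 := by
    rw [polyAct_X, hB]; simp [DB6, Fin.sum_univ_succ]
  have h5 : polyAct D Bgen (X 5) = X 4 := by
    rw [polyAct_X, hB]; simp [DB6, Fin.sum_univ_succ]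
  rw [act_y]
  rcases i with i | i <;> fin_cases i
  · change _ = y (.inl 2)
    simp [y, h1, h2, h4]
  · change _ = y (.inl 0)
    simp [y, h0, h2, h5]
    ring
  · change _ = y (.inl 1)
    simp [y, h0, h1, h3]
    ring
  · change _ = y (.inr 1)
    simp [y, h2]
  · change _ = y (.inr 2)
    simp [y, h1]
  · change _ = y (.inr 0)
    simp [y, h0]
  · change _ = y (.inr 3)
    simp [y, h0, h1, h2, h3, h4, h5]
    ring

lemma mem_invG (hA : (D Agen : Matrix (Fin 6) (Fin 6) F2) = DA6)
    (hB : (D Bgen : Matrix (Fin 6) (Fin 6) F2) = DB6) (f : S6) : f ∈ invG D ↔ GInv f := by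
  constructor
  · intro h
    have h' : ∀ σ ∈ (⊤ : Subgroup G3), polyAct D σ f = f := h
    exact ⟨by rw [← polyAct_A D hA]; exact h' _ trivial,
      by rw [← polyAct_B D hB]; exact h' _ trivial⟩
  · rintro ⟨h1, h2⟩
    rw [← polyAct_A D hA] at h1
    rw [← polyAct_B D hB] at h2
    intro σ _
    obtain ⟨l, rfl⟩ := gen_G σ
    induction l with
    | nil => exact polyAct_one D f
    | cons b l ih =>
      rw [show wdG (b :: l) = (if b then Agen else Bgen) * wdG l by simp [wdG], polyAct_mul]
      cases b
      · rw [if_neg (by simp), h2]; exact ih trivial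
      · rw [if_pos rfl, h1]; exact ih trivial
end

end CM

namespace CM

section
variable {k R M : Type*} [Field k] [CommRing R] [IsDomain R] [Algebra k R] [AddCommGroup M]
  [Module R M] [Module k M] [IsScalarTower k R M]

lemma free_aux [Module.Finite R M] [Module.Projective R M] (ε : R →ₐ[k] k) (S : Set M)
    (hS : Submodule.span k S = ⊤)
    (hN : ∀ T ⊆ S, (∀ m : M, ∃ n ∈ Submodule.span R T, m - n ∈ (RingHom.ker ε) • (⊤ : Submodule R M)) →
      Submodule.span R T = ⊤) : Module.Free R M := by
  set 𝔪 : Ideal R := RingHom.ker ε with h𝔪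
  let W : Submodule R M := 𝔪 • (⊤ : Submodule R M)
  have hε : ∀ a : R, a - algebraMap k R (ε a) ∈ 𝔪 := fun a => by
    rw [h𝔪, RingHom.mem_ker, map_sub, AlgHom.commutes]; simp
  have hsm : ∀ (a : R) (v : M ⧸ W), a • v = ε a • v := by
    intro a v
    obtain ⟨m, rfl⟩ := W.mkQ_surjective v
    rw [← sub_eq_zero, Submodule.mkQ_apply, ← Submodule.Quotient.mk_smul, ← Submodule.Quotient.mk_smul,
      ← Submodule.Quotient.mk_sub, Submodule.Quotient.mk_eq_zero]
    have h1 := Submodule.smul_mem_smul (hε a) (Submodule.mem_top : m ∈ (⊤ : Submodule R M))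
    rwa [sub_smul, algebraMap_smul] at h1
  have hfin : Module.Finite k (M ⧸ W) := by
    obtain ⟨Q, hQ⟩ := (inferInstance : Module.Finite R (M ⧸ W)).fg_top
    refine ⟨⟨Q, ?_⟩⟩
    rw [eq_top_iff]
    intro v _
    have hv : v ∈ Submodule.span R (Q : Set (M ⧸ W)) := by rw [hQ]; trivial
    induction hv using Submodule.span_induction with
    | mem x hx => exact Submodule.subset_span hx
    | zero => exact zero_mem _
    | add x y _ _ hx hy => exact add_mem (hx trivial) (hy trivial)
    | smul a x _ hx => rw [hsm]; exact Submodule.smul_mem _ _ (hx trivial)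
  let q : M →ₗ[k] (M ⧸ W) := W.mkQ.restrictScalars k
  obtain ⟨b, hbs, hb1, hb2⟩ := exists_linearIndependent k (q '' S)
  have hbtop : Submodule.span k b = ⊤ := by
    rw [hb1, Submodule.span_image, hS, Submodule.map_top, LinearMap.range_eq_top]
    exact W.mkQ_surjective
  have hbfin : Finite b := hb2.finite
  have hch : ∀ v : b, ∃ h : M, h ∈ S ∧ W.mkQ h = v := fun v => hbs v.2
  choose h h1 h2 using hch
  have htop : Submodule.span R (Set.range h) = ⊤ := by
    refine hN _ (by rintro _ ⟨v, rfl⟩; exact h1 v) fun m => ?_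
    have hm : W.mkQ m ∈ Submodule.span k (Set.range (Subtype.val : b → M ⧸ W)) := by
      rw [Subtype.range_coe, hbtop]; trivial
    obtain ⟨c, hc⟩ := (Finsupp.mem_span_range_iff_exists_finsupp).1 hm
    refine ⟨c.sum fun v a => a • h v, ?_, ?_⟩
    · refine Submodule.sum_mem _ fun v _ => ?_
      exact Submodule.smul_of_tower_mem _ _ (Submodule.subset_span ⟨v, rfl⟩)
    · change _ ∈ W
      rw [← Submodule.Quotient.mk_eq_zero, Submodule.Quotient.mk_sub, sub_eq_zero]
      change W.mkQ m = q _
      rw [← hc, map_finsuppSum]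
      refine Finsupp.sum_congr fun v _ => ?_
      rw [map_smul]
      congr 1
      exact (h2 v).symm
  let π : (b →₀ R) →ₗ[R] M := Finsupp.linearCombination R h
  have hπ : Function.Surjective π := by
    rw [← LinearMap.range_eq_top, Finsupp.range_linearCombination, htop]
  obtain ⟨s, hs⟩ := Module.projective_lifting_property π LinearMap.id hπ
  let p : (b →₀ R) →ₗ[R] (b →₀ R) := LinearMap.id - s ∘ₗ π
  have hs' : ∀ m, π (s m) = m := fun m => LinearMap.congr_fun hs m
  have hp1 : ∀ x, π (p x) = 0 := fun x => by
    simp only [p, LinearMap.sub_apply, LinearMap.id_apply, LinearMap.comp_apply, map_sub, hs', sub_self]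
  have hp2 : ∀ x, π x = 0 → p x = x := fun x hx => by
    simp only [p, LinearMap.sub_apply, LinearMap.id_apply, LinearMap.comp_apply, hx, map_zero, sub_zero]
  have hK : LinearMap.ker π = LinearMap.range p := by
    ext x
    rw [LinearMap.mem_ker, LinearMap.mem_range]
    exact ⟨fun hx => ⟨x, hp2 x hx⟩, fun ⟨t, ht⟩ => ht ▸ hp1 t⟩
  have hfg : (LinearMap.ker π).FG := by
    rw [hK, LinearMap.range_eq_map]
    exact (Module.Finite.fg_top).map p
  have hle : LinearMap.ker π ≤ 𝔪 • LinearMap.ker π := by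
    intro x hx
    have hx0 : π x = 0 := hx
    have hx1 : ∀ v, x v ∈ 𝔪 := by
      have h3 : ∑ v ∈ x.support, ε (x v) • (v : M ⧸ W) = 0 := by
        have h4 : W.mkQ (π x) = 0 := by rw [hx0, map_zero]
        rw [Finsupp.linearCombination_apply, Finsupp.sum, map_sum] at h4
        rw [← h4]
        refine Finset.sum_congr rfl fun v _ => ?_
        rw [map_smul, h2, hsm]
      intro v
      by_cases hv : v ∈ x.support
      · exact (linearIndependent_iff'.1 hb2) x.support (fun v => ε (x v)) h3 v hv
      · rw [Finsupp.notMem_support_iff.1 hv]; exact zero_mem _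
    have hx2 : x ∈ 𝔪 • (⊤ : Submodule R (b →₀ R)) := by
      rw [← Finsupp.sum_single x]
      refine Submodule.sum_mem _ fun v _ => ?_
      rw [← mul_one (x v), ← smul_eq_mul, ← Finsupp.smul_single]
      exact Submodule.smul_mem_smul (hx1 v) trivial
    have hx3 : p x ∈ Submodule.map p (𝔪 • (⊤ : Submodule R (b →₀ R))) := ⟨x, hx2, rfl⟩
    rw [Submodule.map_smul'', ← LinearMap.range_eq_map, ← hK, hp2 x hx0] at hx3
    exact hx3
  obtain ⟨r, hr1, hr2⟩ :=
    Submodule.exists_sub_one_mem_and_smul_eq_zero_of_fg_of_le_smul 𝔪 _ hfg hle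
  have hr0 : r ≠ 0 := by
    rintro rfl
    rw [h𝔪, RingHom.mem_ker] at hr1
    simp at hr1
  have hinj : Function.Injective π := by
    rw [← LinearMap.ker_eq_bot, eq_bot_iff]
    intro x hx
    have := hr2 x hx
    rw [Submodule.mem_bot]
    ext v
    have h5 := DFunLike.congr_fun this v
    rw [Finsupp.smul_apply, smul_eq_mul, Finsupp.zero_apply] at h5
    exact (mul_eq_zero.1 h5).resolve_left hr0
  exact Module.Free.of_equiv (LinearEquiv.ofBijective π ⟨hinj, hπ⟩)
end

end CM

namespace CM

noncomputable abbrev hc (d : ℕ) : S6 →ₗ[F2] S6 := homogeneousComponent d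

lemma hc_hom {f : S6} {n : ℕ} (hf : f.IsHomogeneous n) (d : ℕ) :
    hc d f = if d = n then f else 0 :=
  homogeneousComponent_of_mem ((mem_homogeneousSubmodule n f).2 hf)

lemma hc_mul (d : ℕ) (a b : S6) : hc d (a * b) =
    ∑ p ∈ Finset.range (a.totalDegree + 1), ∑ q ∈ Finset.range (b.totalDegree + 1),
      if d = p + q then hc p a * hc q b else 0 := by
  conv_lhs => rw [← sum_homogeneousComponent a, ← sum_homogeneousComponent b]
  rw [Finset.sum_mul_sum, map_sum]
  refine Finset.sum_congr rfl fun p _ => ?_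
  rw [map_sum]
  refine Finset.sum_congr rfl fun q _ => ?_
  exact hc_hom ((homogeneousComponent_isHomogeneous p a).mul
    (homogeneousComponent_isHomogeneous q b)) d

lemma act_hom (σ : P7) {f : S6} {n : ℕ} (hf : f.IsHomogeneous n) : (act σ f).IsHomogeneous n := by
  have : ∀ k, (xs (fun i => y (σ i)) k).IsHomogeneous 1 := by
    intro k
    have hy : ∀ i, (y (σ i)).IsHomogeneous 1 := fun i => y_hom _
    fin_cases k
    · exact hy _
    · exact hy _
    · exact hy _
    · exact ((hy _).add (hy _)).add (hy _)
    · exact ((hy _).add (hy _)).add (hy _)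
    · exact ((hy _).add (hy _)).add (hy _)
  have h := IsHomogeneous.aeval hf _ this
  rwa [one_mul] at h

lemma act_hc (σ : P7) (d : ℕ) (f : S6) : act σ (hc d f) = hc d (act σ f) := by
  have h : ∀ g : S6, ∀ n, g.IsHomogeneous n → act σ (hc d g) = hc d (act σ g) := by
    intro g n hg
    rw [hc_hom hg, hc_hom (act_hom σ hg)]
    split_ifs
    · rfl
    · exact map_zero _
  rw [← sum_homogeneousComponent f]
  simp only [map_sum]
  exact Finset.sum_congr rfl fun i _ => h _ _ (homogeneousComponent_isHomogeneous i f)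

lemma GInv.hc {f : S6} (hf : GInv f) (d : ℕ) : GInv (hc d f) :=
  ⟨by rw [act_hc, hf.1], by rw [act_hc, hf.2]⟩

section
variable (B : Subalgebra F2 S6) (hB : ∀ f ∈ B, ∀ d, hc d f ∈ B)

/-- homogeneous component on a graded subalgebra -/
noncomputable def hcB (d : ℕ) : B →ₗ[F2] B where
  toFun b := ⟨hc d b, hB b b.2 d⟩
  map_add' a b := Subtype.ext (map_add (hc d) (a : S6) b)
  map_smul' r a := Subtype.ext (map_smul (hc d) r (a : S6))

lemma hcB_coe (d : ℕ) (b : B) : (hcB B hB d b : S6) = hc d b := rfl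

lemma hcB_mul (d : ℕ) (a b : B) : hcB B hB d (a * b) =
    ∑ p ∈ Finset.range ((a : S6).totalDegree + 1), ∑ q ∈ Finset.range ((b : S6).totalDegree + 1),
      if d = p + q then hcB B hB p a * hcB B hB q b else 0 := by
  apply Subtype.ext
  rw [hcB_coe, MulMemClass.coe_mul, hc_mul, AddSubmonoidClass.coe_finsetSum]
  refine Finset.sum_congr rfl fun p _ => ?_
  rw [AddSubmonoidClass.coe_finsetSum]
  refine Finset.sum_congr rfl fun q _ => ?_
  split_ifs <;> rfl

lemma hcB_hom {b : B} {n : ℕ} (hb : (b : S6).IsHomogeneous n) (d : ℕ) :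
    hcB B hB d b = if d = n then b else 0 := by
  apply Subtype.ext
  rw [hcB_coe, hc_hom hb]
  split_ifs <;> rfl

lemma sum_cB (b : B) : ∑ i ∈ Finset.range ((b : S6).totalDegree + 1), hcB B hB i b = b := by
  apply Subtype.ext
  rw [AddSubmonoidClass.coe_finsetSum]
  exact sum_homogeneousComponent (b : S6)

lemma adjoin_hcB {ι : Type*} (f : ι → B) (n : ι → ℕ) (hf : ∀ i, (f i : S6).IsHomogeneous (n i))
    (a : B) (ha : a ∈ Algebra.adjoin F2 (Set.range f)) (d : ℕ) :
    hcB B hB d a ∈ Algebra.adjoin F2 (Set.range f) := by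
  induction ha using Algebra.adjoin_induction generalizing d with
  | mem x hx =>
    obtain ⟨i, rfl⟩ := hx
    rw [hcB_hom B hB (hf i)]
    split_ifs
    · exact Algebra.subset_adjoin ⟨i, rfl⟩
    · exact zero_mem _
  | algebraMap r =>
    have : ((algebraMap F2 B r : B) : S6).IsHomogeneous 0 := isHomogeneous_C (Fin 6) r
    rw [hcB_hom B hB this]
    split_ifs
    · exact Subalgebra.algebraMap_mem _ _
    · exact zero_mem _
  | add a b _ _ ha hb => rw [map_add]; exact add_mem (ha d) (hb d)
  | mul a b _ _ ha hb =>
    rw [hcB_mul]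
    refine sum_mem fun p _ => sum_mem fun q _ => ?_
    split_ifs
    · exact mul_mem (ha p) (hb q)
    · exact zero_mem _

lemma free_graded (R : Subalgebra F2 B) (hR : ∀ a ∈ R, ∀ d, hcB B hB d a ∈ R)
    (h1 : Module.Finite R B) (h2 : Module.Projective R B) : Module.Free R B := by
  let ε : R →ₐ[F2] F2 := ((aeval (fun _ : Fin 6 => (0 : F2))).comp B.val).comp R.val
  have hε : ∀ a : R, ε a = 0 → hcB B hB 0 a = 0 := by
    intro a ha
    apply Subtype.ext
    rw [hcB_coe, hc, homogeneousComponent_zero]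
    have : constantCoeff ((a : B) : S6) = 0 := by
      rw [← ha]
      change _ = aeval (fun _ : Fin 6 => (0 : F2)) ((a : B) : S6)
      rw [aeval_zero' ]
      rfl
    rw [constantCoeff_eq] at this
    rw [this, map_zero]; rfl
  refine free_aux (k := F2) (R := R) (M := B) ε {m : B | ∃ d, (m : S6).IsHomogeneous d} ?_ ?_
  · rw [eq_top_iff]
    intro m _
    rw [← sum_cB B hB m]
    exact sum_mem fun i _ => Submodule.subset_span ⟨i, homogeneousComponent_isHomogeneous i (m : S6)⟩
  · intro T hT hgen
    have hN : ∀ n ∈ Submodule.span R T, ∀ d, hcB B hB d n ∈ Submodule.span R T := by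
      intro n hn
      induction hn using Submodule.span_induction with
      | mem t ht =>
        intro d
        obtain ⟨e, he⟩ := hT ht
        rw [hcB_hom B hB he]
        split_ifs
        · exact Submodule.subset_span ht
        · exact zero_mem _
      | zero => intro d; rw [map_zero]; exact zero_mem _
      | add x y _ _ hx hy => intro d; rw [map_add]; exact add_mem (hx d) (hy d)
      | smul a x _ hx =>
        intro d
        rw [Subalgebra.smul_def, smul_eq_mul, hcB_mul]
        refine sum_mem fun p _ => sum_mem fun q _ => ?_
        split_ifs
        · exact Submodule.smul_mem _ (⟨hcB B hB p a, hR a a.2 p⟩ : R) (hx q)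
        · exact zero_mem _
    have key : ∀ d, ∀ m, hcB B hB d m ∈ Submodule.span R T := by
      intro d
      induction d using Nat.strong_induction_on with
      | _ d ih =>
      intro m
      obtain ⟨n, hn, hmn⟩ := hgen m
      rw [← sub_add_cancel m n, map_add]
      refine add_mem ?_ (hN n hn d)
      generalize m - n = u at hmn
      induction hmn using Submodule.smul_induction_on' with
      | smul a ha x _ =>
        rw [Subalgebra.smul_def, smul_eq_mul, hcB_mul]
        refine sum_mem fun p _ => sum_mem fun q _ => ?_
        split_ifs with hd
        · rcases Nat.eq_zero_or_pos p with rfl | hp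
          · rw [hε a ha, zero_mul]; exact zero_mem _
          · exact Submodule.smul_mem _ (⟨hcB B hB p a, hR a a.2 p⟩ : R) (ih q (by omega) x)
        · exact zero_mem _
      | add x _ y _ hx hy => rw [map_add]; exact add_mem hx hy
    rw [eq_top_iff]
    intro m _
    rw [← sum_cB B hB m]
    exact sum_mem fun i _ => key i m
end

end CM


namespace CM

lemma proj_gen {A B' : Type} [CommRing A] [AddCommGroup B'] [Module A B'] (ι : A →+* S6)
    (h1 : ∀ (σ : P7) (a : A), act σ (ι a) = ι a) (h3 : Function.Injective ι)
    (h2 : ∀ s, (∀ σ, act σ s = s) → ∃ a, ι a = s)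
    (j : B' → S6) (jadd : ∀ x y, j (x + y) = j x + j y) (jsmul : ∀ (a : A) x, j (a • x) = ι a * j x)
    (jinj : Function.Injective j) (hj : ∀ g, (∃ b, j b = g) ↔ GInv g) :
    Module.Projective A B' ∧ Module.Finite A B' := by
  letI : Algebra A S6 := ι.toAlgebra
  let φ : B' →ₗ[A] S6 :=
    { toFun := j, map_add' := jadd, map_smul' := fun a x => by
        rw [jsmul, RingHom.id_apply, Algebra.smul_def]; rfl }
  have hM : ∀ g, g ∈ LinearMap.range φ ↔ GInv g := hj
  have hinj : Function.Injective φ := jinj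
  obtain ⟨hp, hfin⟩ := main_proj (A := A) h1 h3 h2 (LinearMap.range φ) hM
  exact ⟨Module.Projective.of_equiv (LinearEquiv.ofInjective φ hinj).symm,
    Module.Finite.equiv (LinearEquiv.ofInjective φ hinj).symm⟩

lemma proj_B (B : Subalgebra F2 S6) (hmem : ∀ g, g ∈ B ↔ GInv g) (R : Subalgebra F2 B)
    (hmap : R.map B.val = AA) : Module.Projective R B ∧ Module.Finite R B := by
  refine proj_gen (A := R) (B' := B) ((B.val.comp R.val : R →ₐ[F2] S6) : R →+* S6) ?_ ?_ ?_
    Subtype.val (fun _ _ => rfl) (fun _ _ => rfl) Subtype.val_injective ?_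
  · intro σ a
    have : ((a : B) : S6) ∈ AA := by rw [← hmap]; exact ⟨a, a.2, rfl⟩
    exact AA1 σ ⟨_, this⟩
  · exact fun _ _ h => Subtype.ext (Subtype.ext h)
  · intro s hs
    have h : s ∈ AA := fund s hs
    rw [← hmap] at h
    obtain ⟨a, ha, h⟩ := h
    exact ⟨⟨a, ha⟩, h⟩
  · intro g
    rw [← hmem]
    exact ⟨fun ⟨b, hb⟩ => hb ▸ b.2, fun h => ⟨⟨g, h⟩, rfl⟩⟩

lemma final_B (B : Subalgebra F2 S6) (hmem : ∀ g, g ∈ B ↔ GInv g) :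
    ∃ f : Fin 6 → B, AlgebraicIndependent F2 f ∧
      (∀ i, ∃ d : ℕ, 0 < d ∧ (f i : S6).IsHomogeneous d) ∧
      Module.Finite (Algebra.adjoin F2 (Set.range f)) B ∧
      Module.Free (Algebra.adjoin F2 (Set.range f)) B := by
  have hex : ∃ f : Fin 6 → B, ∀ i, (f i : S6) = fe i :=
    ⟨fun i => ⟨fe i, (hmem _).2 ⟨act_fe _ i, act_fe _ i⟩⟩, fun i => rfl⟩
  obtain ⟨f, hf⟩ := hex
  have hf' : B.val ∘ f = fe := funext hf
  have hmap : (Algebra.adjoin F2 (Set.range f)).map B.val = AA := by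
    rw [AlgHom.map_adjoin, ← Set.range_comp, hf']
  have hgr : ∀ g ∈ B, ∀ d, hc d g ∈ B := fun g hg d =>
    (hmem _).2 (((hmem g).1 hg).hc d)
  have hh : ∀ i, (f i : S6).IsHomogeneous ((i : ℕ) + 2) := fun i => by rw [hf]; exact fe_hom i
  obtain ⟨hp, hfin⟩ := proj_B B hmem _ hmap
  refine ⟨f, ?_, fun i => ⟨i + 2, by omega, hh i⟩, hfin, ?_⟩
  · rw [← AlgHom.algebraicIndependent_iff B.val Subtype.val_injective, hf']
    exact fe_indep
  · exact free_graded B hgr _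
      (fun a ha d => adjoin_hcB B hgr f (fun i => i + 2) hh a ha d) hfin hp

end CM

theorem stmt12 (D : G3 →* GL (Fin 6) F2)
    (hA : (D Agen : Matrix (Fin 6) (Fin 6) F2) = DA6)
    (hB : (D Bgen : Matrix (Fin 6) (Fin 6) F2) = DB6) :
    ∃ f : Fin 6 → (invG D),
      -- `f` is a homogeneous system of parameters of `S[W'^*]^G` …
      AlgebraicIndependent F2 f ∧
      (∀ i, ∃ d : ℕ, 0 < d ∧ (f i : MvPolynomial (Fin 6) F2).IsHomogeneous d) ∧
      Module.Finite (Algebra.adjoin F2 (Set.range f)) (invG D) ∧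
      -- … over whose generated polynomial subalgebra `S[W'^*]^G` is free:
      Module.Free (Algebra.adjoin F2 (Set.range f)) (invG D) := by
  exact CM.final_B (invG D) (CM.mem_invG D hA hB)
end

section
/- The invariant ring S[W'^*]^G admits a homogeneous system of parameters consisting of 6 algebraically independent homogeneous invariants f_1, …, f_6 of degrees 2, 3, 3, 4, 6, 7 respectively, over whose generated polynomial subalgebra S[W'^*]^G is a finitely generated module. -/
set_option synthInstance.maxHeartbeats 1000000
set_option maxHeartbeats 1000000

open MvPolynomial

theorem graded_finite {k R : Type} [Field k] [CommRing R] {m n : ℕ} [Algebra k R]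
    [Algebra R (MvPolynomial (Fin m) k)] [IsScalarTower k R (MvPolynomial (Fin m) k)]
    (F : Fin n → MvPolynomial (Fin m) k) (d : Fin n → ℕ)
    (hF : ∀ i, (F i).IsHomogeneous (d i)) (hd : ∀ i, 0 < d i)
    (hR : ∀ i, ∃ r : R, algebraMap R (MvPolynomial (Fin m) k) r = F i)
    (hrad : ∀ j, X j ∈ (Ideal.span (Set.range F)).radical) :
    Module.Finite R (MvPolynomial (Fin m) k) := by
  classical
  have h1 : idealOfVars (Fin m) k ≤ (Ideal.span (Set.range F)).radical := by
    rw [idealOfVars, Ideal.span_le]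
    rintro _ ⟨j, rfl⟩
    exact hrad j
  obtain ⟨N, hN⟩ := Ideal.exists_pow_le_of_le_radical_of_fg h1 (idealOfVars_fg _ _)
  let T : Set (MvPolynomial (Fin m) k) := ⋃ a ∈ Finset.range N,
    (fun e : Fin m →₀ ℕ => monomial e (1 : k)) '' (Finset.finsuppAntidiag Finset.univ a : Finset (Fin m →₀ ℕ))
  have hT : T.Finite := by
    apply Set.Finite.biUnion (Finset.finite_toSet _)
    intro a _
    exact (Finset.finite_toSet _).image _
  have key : ∀ a : ℕ, ∀ p : MvPolynomial (Fin m) k, p.IsHomogeneous a → p ∈ Submodule.span R T := by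
    intro a
    induction a using Nat.strong_induction_on with
    | _ a ih =>
    intro p hp
    by_cases haN : a < N
    · rw [p.as_sum]
      refine Submodule.sum_mem _ fun e he => ?_
      have : monomial e (coeff e p) = (algebraMap k R (coeff e p)) • (monomial e (1 : k)) := by
        rw [algebraMap_smul, smul_monomial, smul_eq_mul, mul_one]
      rw [this]
      refine Submodule.smul_mem _ _ (Submodule.subset_span ?_)
      refine Set.mem_biUnion (Finset.mem_coe.2 (Finset.mem_range.2 haN)) ⟨e, ?_, rfl⟩
      have := hp (mem_support_iff.1 he)
      rw [Finset.mem_coe, Finset.mem_finsuppAntidiag]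
      refine ⟨?_, by simp⟩
      rw [← this, Finsupp.weight_apply, Finsupp.sum_fintype _ _ (by simp)]
      simp
    · have hpI : p ∈ Ideal.span (Set.range F) := by
        apply hN
        rw [mem_pow_idealOfVars_iff']
        intro e he
        by_contra hne
        have h2 := hp hne
        have h2' : Finsupp.degree e = a := by
          rw [Finsupp.degree_eq_weight_one]; exact h2
        omega
      obtain ⟨c, hc⟩ := (Ideal.mem_span_range_iff_exists_fun).1 hpI
      have h3 : p = ∑ i, homogeneousComponent a (c i * F i) := by
        rw [← map_sum, hc, homogeneousComponent_of_mem hp, if_pos rfl]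
      rw [h3]
      refine Submodule.sum_mem _ fun i _ => ?_
      have h4 : homogeneousComponent a (c i * F i) =
          if d i ≤ a then homogeneousComponent (a - d i) (c i) * F i else 0 := by
        let _ := MvPolynomial.gradedAlgebra (σ := Fin m) (R := k)
        have := DirectSum.coe_decompose_mul_of_right_mem (𝒜 := homogeneousSubmodule (Fin m) k)
          (a := c i) a ((mem_homogeneousSubmodule _ _).2 (hF i))
        have hdec : ∀ (φ : MvPolynomial (Fin m) k) (j : ℕ),
            ((DirectSum.decompose (homogeneousSubmodule (Fin m) k) φ j :
              homogeneousSubmodule (Fin m) k j) : MvPolynomial (Fin m) k) =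
              homogeneousComponent j φ := fun φ j => decomposition.decompose'_apply φ j
        rw [hdec, hdec] at this
        exact this
      rw [h4]
      split_ifs with h5
      · obtain ⟨r, hr⟩ := hR i
        rw [mul_comm, ← hr, ← Algebra.smul_def]
        exact Submodule.smul_mem _ _ (ih _ (by have := hd i; omega) _
          (homogeneousComponent_isHomogeneous _ _))
      · exact Submodule.zero_mem _
  refine ⟨⟨hT.toFinset, ?_⟩⟩
  rw [Set.Finite.coe_toFinset, eq_top_iff]
  intro p _
  rw [← sum_homogeneousComponent p]
  exact Submodule.sum_mem _ fun i _ => key i _ (homogeneousComponent_isHomogeneous _ _)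
theorem three_zero {K : Type*} [CommRing K] [IsDomain K] (h2 : (2:K) = 0) (x y z : K)
    (h : x + y + z = 0) (he : x*y+y*z+z*x = 0) (hc : x^3+y^3+z^3 = 0) : x = 0 ∧ y = 0 ∧ z = 0 := by
  have hx : z = -(x+y) := by linear_combination h
  subst hx
  have : x * y * (x + y) = 0 := by
    linear_combination hc + (2*x^2*y+2*x*y^2) * h2
  have hy : y ^ 3 = 0 := by linear_combination -y * he - this
  have hx : x ^ 3 = 0 := by linear_combination -x * he - this
  have hx := pow_eq_zero_iff (three_ne_zero) |>.1 hx
  have hy := pow_eq_zero_iff (three_ne_zero) |>.1 hy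
  subst hx hy
  simp
theorem five_zero {K : Type*} [CommRing K] [IsDomain K] (h2 : (2:K) = 0) (r p q s t : K)
    (h : r+p+q+s+t = 0) (he : r*(p+q+s+t)+p*(q+s+t)+q*(s+t)+s*t = 0)
    (hc : r^3+p^3+q^3+s^3+t^3 = 0) (hl : r*(p*t+q*s) = 0) (hq : p*q*s*t = 0) :
    r = 0 ∧ p = 0 ∧ q = 0 ∧ s = 0 ∧ t = 0 := by
  have h3 := three_zero h2
  have step : ∀ r q s t : K, r+q+s+t = 0 → r*(q+s+t)+q*(s+t)+s*t = 0 → r^3+q^3+s^3+t^3=0 →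
      r*q*s = 0 → r = 0 ∧ q = 0 ∧ s = 0 ∧ t = 0 := by
    intro r q s t h he hc hl
    rcases mul_eq_zero.1 hl with hl | rfl
    · rcases mul_eq_zero.1 hl with rfl | rfl
      · have := h3 q s t (by linear_combination h) (by linear_combination he) (by linear_combination hc)
        tauto
      · have := h3 r s t (by linear_combination h) (by linear_combination he) (by linear_combination hc)
        tauto
    · have := h3 r q t (by linear_combination h) (by linear_combination he) (by linear_combination hc)
      tauto
  rcases mul_eq_zero.1 hq with hq | rfl
  · rcases mul_eq_zero.1 hq with hq | rfl
    · rcases mul_eq_zero.1 hq with rfl | rfl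
      · have := step r q s t (by linear_combination h) (by linear_combination he) (by linear_combination hc) (by linear_combination hl)
        tauto
      · have := step r p t s (by linear_combination h) (by linear_combination he) (by linear_combination hc) (by linear_combination hl)
        tauto
    · have := step r p t q (by linear_combination h) (by linear_combination he) (by linear_combination hc) (by linear_combination hl)
      tauto
  · have := step r q s p (by linear_combination h) (by linear_combination he) (by linear_combination hc) (by linear_combination hl)
    tauto
theorem six_zero {K : Type*} [CommRing K] [IsDomain K] (h2 : (2:K) = 0) (p q r s t u : K)
    (h : p+q+r+s+t+u = 0) (he : p*(q+r+s+t+u)+q*(r+s+t+u)+r*(s+t+u)+s*(t+u)+t*u = 0)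
    (hc : p^3+q^3+r^3+s^3+t^3+u^3 = 0) (hl : p*r*t+p*s*u+q*r*u+q*s*t = 0)
    (hq : p*q*r*s+p*q*t*u+r*s*t*u = 0) (h6 : p*q*r*s*t*u = 0) :
    p = 0 ∧ q = 0 ∧ r = 0 ∧ s = 0 ∧ t = 0 ∧ u = 0 := by
  have h5 := five_zero h2
  simp only [mul_eq_zero] at h6
  rcases h6 with ((((rfl | rfl) | rfl) | rfl) | rfl) | rfl
  · have := h5 q r s t u (by linear_combination h) (by linear_combination he)
      (by linear_combination hc) (by linear_combination hl) (by linear_combination hq)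
    tauto
  · have := h5 p s r t u (by linear_combination h) (by linear_combination he)
      (by linear_combination hc) (by linear_combination hl) (by linear_combination hq)
    tauto
  · have := h5 s p q t u (by linear_combination h) (by linear_combination he)
      (by linear_combination hc) (by linear_combination hl) (by linear_combination hq)
    tauto
  · have := h5 r q p t u (by linear_combination h) (by linear_combination he)
      (by linear_combination hc) (by linear_combination hl) (by linear_combination hq)
    tauto
  · have := h5 u p q r s (by linear_combination h) (by linear_combination he)
      (by linear_combination hc) (by linear_combination hl) (by linear_combination hq)
    tauto
  · have := h5 t q p r s (by linear_combination h) (by linear_combination he)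
      (by linear_combination hc) (by linear_combination hl) (by linear_combination hq)
    tauto

def ff1 {K : Type*} [CommRing K] (y : Fin 7 → K) : K :=
  y 0*(y 1+y 2+y 3+y 4+y 5+y 6)+y 1*(y 2+y 3+y 4+y 5+y 6)+y 2*(y 3+y 4+y 5+y 6)+
    y 3*(y 4+y 5+y 6)+y 4*(y 5+y 6)+y 5*y 6
def ff2 {K : Type*} [CommRing K] (y : Fin 7 → K) : K :=
  y 0^3+y 1^3+y 2^3+y 3^3+y 4^3+y 5^3+y 6^3
def ff3 {K : Type*} [CommRing K] (y : Fin 7 → K) : K :=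
  y 0*y 1*y 5+y 0*y 2*y 4+y 0*y 3*y 6+y 1*y 2*y 3+y 1*y 4*y 6+y 2*y 5*y 6+y 3*y 4*y 5
def ff4 {K : Type*} [CommRing K] (y : Fin 7 → K) : K :=
  y 2*y 3*y 4*y 6+y 1*y 3*y 5*y 6+y 1*y 2*y 4*y 5+y 0*y 4*y 5*y 6+y 0*y 2*y 3*y 5+y 0*y 1*y 3*y 4+y 0*y 1*y 2*y 6
def ff6 {K : Type*} [CommRing K] (y : Fin 7 → K) : K :=
  y 1*y 2*y 3*y 4*y 5*y 6+y 0*y 2*y 3*y 4*y 5*y 6+y 0*y 1*y 3*y 4*y 5*y 6+y 0*y 1*y 2*y 4*y 5*y 6+y 0*y 1*y 2*y 3*y 5*y 6+y 0*y 1*y 2*y 3*y 4*y 6+y 0*y 1*y 2*y 3*y 4*y 5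
def ff7 {K : Type*} [CommRing K] (y : Fin 7 → K) : K :=
  y 0*y 1*y 2*y 3*y 4*y 5*y 6

theorem seven_zero {K : Type*} [CommRing K] [IsDomain K] (h2 : (2:K) = 0) (y : Fin 7 → K)
    (h : y 0+y 1+y 2+y 3+y 4+y 5+y 6 = 0) (h1 : ff1 y = 0) (hc : ff2 y = 0) (h3 : ff3 y = 0)
    (h4 : ff4 y = 0) (h6 : ff6 y = 0) (h7 : ff7 y = 0) : ∀ i, y i = 0 := by
  have hs := six_zero h2
  simp only [ff1, ff2, ff3, ff4, ff6, ff7] at *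
  generalize hy0 : y 0 = y0 at *
  generalize hy1 : y 1 = y1 at *
  generalize hy2 : y 2 = y2 at *
  generalize hy3 : y 3 = y3 at *
  generalize hy4 : y 4 = y4 at *
  generalize hy5 : y 5 = y5 at *
  generalize hy6 : y 6 = y6 at *
  suffices y0 = 0 ∧ y1 = 0 ∧ y2 = 0 ∧ y3 = 0 ∧ y4 = 0 ∧ y5 = 0 ∧ y6 = 0 by
    obtain ⟨g0, g1, g2, g3, g4, g5, g6⟩ := this
    intro i
    fin_cases i
    exacts [hy0.trans g0, hy1.trans g1, hy2.trans g2, hy3.trans g3, hy4.trans g4, hy5.trans g5, hy6.trans g6]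
  clear hy0 hy1 hy2 hy3 hy4 hy5 hy6
  simp only [mul_eq_zero] at h7
  rcases h7 with (((((h7 | h7) | h7) | h7) | h7) | h7) | h7 <;> subst h7
  · have := hs y1 y5 y2 y4 y3 y6 (by linear_combination h) (by linear_combination h1)
      (by linear_combination hc) (by linear_combination h3) (by linear_combination h4)
      (by linear_combination h6)
    tauto
  · have := hs y0 y5 y2 y3 y4 y6 (by linear_combination h) (by linear_combination h1)
      (by linear_combination hc) (by linear_combination h3) (by linear_combination h4)
      (by linear_combination h6)
    tauto
  · have := hs y0 y4 y1 y3 y5 y6 (by linear_combination h) (by linear_combination h1)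
      (by linear_combination hc) (by linear_combination h3) (by linear_combination h4)
      (by linear_combination h6)
    tauto
  · have := hs y0 y6 y1 y2 y5 y4 (by linear_combination h) (by linear_combination h1)
      (by linear_combination hc) (by linear_combination h3) (by linear_combination h4)
      (by linear_combination h6)
    tauto
  · have := hs y0 y2 y1 y6 y5 y3 (by linear_combination h) (by linear_combination h1)
      (by linear_combination hc) (by linear_combination h3) (by linear_combination h4)
      (by linear_combination h6)
    tauto
  · have := hs y0 y1 y2 y6 y4 y3 (by linear_combination h) (by linear_combination h1)
      (by linear_combination hc) (by linear_combination h3) (by linear_combination h4)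
      (by linear_combination h6)
    tauto
  · have := hs y0 y3 y1 y4 y5 y2 (by linear_combination h) (by linear_combination h1)
      (by linear_combination hc) (by linear_combination h3) (by linear_combination h4)
      (by linear_combination h6)
    tauto

theorem closure_top : Subgroup.closure ({Agen, Bgen} : Set G3) = ⊤ := by
  rw [eq_top_iff]
  have hAm : Agen ∈ Subgroup.closure ({Agen, Bgen} : Set G3) := Subgroup.subset_closure (by simp)
  have hBm : Bgen ∈ Subgroup.closure ({Agen, Bgen} : Set G3) := Subgroup.subset_closure (by simp)
  have key : ∀ M : Matrix (Fin 3) (Fin 3) F2, M.det ≠ 0 →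
      ∀ σ : G3, (σ : Matrix (Fin 3) (Fin 3) F2) = M →
        σ ∈ Subgroup.closure ({Agen, Bgen} : Set G3) := by
    intro M hM
    refine Matrix.diagonal_transvection_induction_of_det_ne_zero
      (fun M => ∀ σ : G3, (σ : Matrix (Fin 3) (Fin 3) F2) = M →
        σ ∈ Subgroup.closure ({Agen, Bgen} : Set G3)) M hM ?_ ?_ ?_
    · intro E hE σ hσ
      have : E = 1 := by
        rw [Matrix.det_diagonal, Finset.prod_ne_zero_iff] at hE
        funext i
        have h := hE i (Finset.mem_univ _)
        have h2 : ∀ x : F2, x ≠ 0 → x = 1 := by decide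
        exact h2 _ h
      have : σ = 1 := Units.ext (by rw [hσ, this]; simp)
      rw [this]
      exact one_mem _
    · rintro ⟨i, j, hij, c⟩ σ hσ
      have hc : ∀ x : F2, x = 0 ∨ x = 1 := by decide
      rcases hc c with rfl | rfl
      · have : σ = 1 := Units.ext (by rw [hσ]; simp [Matrix.TransvectionStruct.toMatrix])
        rw [this]
        exact one_mem _
      · have h3 : ∀ i j : Fin 3, i ≠ j →
            Matrix.transvection i j (1 : F2) = ((
              if i = 0 ∧ j = 1 then Agen*Bgen*Bgen*Agen*Bgen*Agen*Bgen*Bgen*Agen*Bgen else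
              if i = 0 ∧ j = 2 then Agen else
              if i = 1 ∧ j = 0 then Bgen*Agen*Bgen*Bgen else
              if i = 1 ∧ j = 2 then Agen*Bgen*Agen*Bgen*Bgen*Agen*Bgen*Agen*Bgen*Bgen else
              if i = 2 ∧ j = 0 then Bgen*Agen*Bgen*Agen*Bgen*Bgen*Agen*Bgen*Agen*Bgen else
              Bgen*Bgen*Agen*Bgen : G3) : Matrix (Fin 3) (Fin 3) F2) := by
          intro i j hij
          fin_cases i <;> fin_cases j <;> first | exact absurd rfl hij | decide
        have h4 := Units.ext (hσ.trans (h3 i j hij))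
        rw [h4]
        split_ifs <;> repeat' first | exact hAm | exact hBm | apply mul_mem
    · intro P Q hP hQ ihP ihQ σ hσ
      have hP' : IsUnit P.det := isUnit_iff_ne_zero.2 hP
      have hQ' : IsUnit Q.det := isUnit_iff_ne_zero.2 hQ
      have : σ = Matrix.GeneralLinearGroup.mk'' P hP' * Matrix.GeneralLinearGroup.mk'' Q hQ' :=
        Units.ext (by rw [hσ]; rfl)
      rw [this]
      exact mul_mem (ihP _ rfl) (ihQ _ rfl)
  intro σ _
  refine key _ ?_ σ rfl
  exact (Matrix.isUnits_det_units σ).ne_zero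

theorem polyAct_mul (D : G3 →* GL (Fin 6) F2) (σ τ : G3) (p : MvPolynomial (Fin 6) F2) :
    polyAct D (σ * τ) p = polyAct D τ (polyAct D σ p) := by
  have : polyAct D (σ * τ) = (polyAct D τ).comp (polyAct D σ) := by
    apply MvPolynomial.algHom_ext
    intro i
    simp only [polyAct, aeval_X, AlgHom.comp_apply, map_mul, Units.val_mul, Matrix.mul_apply,
      map_sum, map_smul, Finset.smul_sum, Finset.sum_smul, smul_smul]
    rw [Finset.sum_comm]
  rw [this]
  rfl

theorem polyAct_one (D : G3 →* GL (Fin 6) F2) (p : MvPolynomial (Fin 6) F2) :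
    polyAct D 1 p = p := by
  have : polyAct D 1 = AlgHom.id _ _ := by
    apply MvPolynomial.algHom_ext
    intro i
    simp [polyAct, Matrix.one_apply]
  rw [this]
  rfl

theorem mem_invG_of_gens (D : G3 →* GL (Fin 6) F2) (p : MvPolynomial (Fin 6) F2)
    (h1 : polyAct D Agen p = p) (h2 : polyAct D Bgen p = p) : p ∈ invG D := by
  intro σ _
  have hσ : σ ∈ Subgroup.closure ({Agen, Bgen} : Set G3) := by
    rw [closure_top]; trivial
  induction hσ using Subgroup.closure_induction with
  | mem x hx => rcases hx with rfl | rfl <;> assumption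
  | one => exact polyAct_one D p
  | mul x y _ _ hx hy => rw [polyAct_mul, hx trivial, hy trivial]
  | inv x _ hx =>
    have := polyAct_mul D x x⁻¹ p
    rw [mul_inv_cancel, polyAct_one, hx trivial] at this
    exact this.symm

noncomputable def yy : Fin 7 → MvPolynomial (Fin 6) F2 :=
  ![X 0, X 1, X 2, X 1 + X 2 + X 4, X 0 + X 2 + X 5, X 0 + X 1 + X 3,
    X 0 + X 1 + X 2 + X 3 + X 4 + X 5]

theorem two_zero : (2 : MvPolynomial (Fin 6) F2) = 0 := CharTwo.two_eq_zero

theorem actA (D : G3 →* GL (Fin 6) F2) (hA : (D Agen : Matrix (Fin 6) (Fin 6) F2) = DA6) (i : Fin 7) :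
    polyAct D Agen (yy i) = yy (![4, 1, 2, 3, 0, 6, 5] i) := by
  have h2 := two_zero
  fin_cases i <;>
    simp [yy, polyAct, hA, DA6, Fin.sum_univ_succ, Matrix.of_apply, Fin.succ] <;> grind

theorem actB (D : G3 →* GL (Fin 6) F2) (hB : (D Bgen : Matrix (Fin 6) (Fin 6) F2) = DB6) (i : Fin 7) :
    polyAct D Bgen (yy i) = yy (![2, 0, 1, 5, 3, 4, 6] i) := by
  have h2 := two_zero
  fin_cases i <;>
    simp [yy, polyAct, hB, DB6, Fin.sum_univ_succ, Matrix.of_apply, Fin.succ] <;> grind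

def ff {K : Type*} [CommRing K] (y : Fin 7 → K) : Fin 6 → K :=
  ![ff1 y, ff2 y, ff3 y, ff4 y, ff6 y, ff7 y]

theorem ff_map {K K' : Type*} [CommRing K] [CommRing K'] (φ : K →+* K') (y : Fin 7 → K) (i : Fin 6) :
    φ (ff y i) = ff (fun j => φ (y j)) i := by
  fin_cases i <;> simp [ff, ff1, ff2, ff3, ff4, ff6, ff7]

theorem ff_permA {K : Type*} [CommRing K] (y : Fin 7 → K) (i : Fin 6) :
    ff (fun j => y (![4, 1, 2, 3, 0, 6, 5] j)) i = ff y i := by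
  fin_cases i <;> simp [ff, ff1, ff2, ff3, ff4, ff6, ff7] <;> ring

theorem ff_permB {K : Type*} [CommRing K] (y : Fin 7 → K) (i : Fin 6) :
    ff (fun j => y (![2, 0, 1, 5, 3, 4, 6] j)) i = ff y i := by
  fin_cases i <;> simp [ff, ff1, ff2, ff3, ff4, ff6, ff7] <;> ring

theorem ff_mem (D : G3 →* GL (Fin 6) F2)
    (hA : (D Agen : Matrix (Fin 6) (Fin 6) F2) = DA6)
    (hB : (D Bgen : Matrix (Fin 6) (Fin 6) F2) = DB6) (i : Fin 6) : ff yy i ∈ invG D := by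
  apply mem_invG_of_gens
  · have := ff_map (polyAct D Agen : MvPolynomial (Fin 6) F2 →+* MvPolynomial (Fin 6) F2) yy i
    simp only [RingHom.coe_coe, actA D hA] at this
    rw [this, ff_permA]
  · have := ff_map (polyAct D Bgen : MvPolynomial (Fin 6) F2 →+* MvPolynomial (Fin 6) F2) yy i
    simp only [RingHom.coe_coe, actB D hB] at this
    rw [this, ff_permB]

theorem ff_hom (y : Fin 7 → MvPolynomial (Fin 6) F2) (hy : ∀ i, (y i).IsHomogeneous 1) (i : Fin 6) :
    (ff y i).IsHomogeneous (![2, 3, 3, 4, 6, 7] i) := by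
  have hm : ∀ (a b : MvPolynomial (Fin 6) F2) (m : ℕ), a.IsHomogeneous m → b.IsHomogeneous 1 →
    (a * b).IsHomogeneous (m + 1) := fun a b m ha hb => ha.mul hb
  have hp : ∀ i, (y i ^ 3).IsHomogeneous 3 := fun i => by simpa using (hy i).pow 3
  have c1 : (ff1 y).IsHomogeneous 2 := by
    unfold ff1
    repeat' first | exact hy _ | refine IsHomogeneous.add ?_ ?_ | refine hm _ _ _ ?_ ?_
  have c2 : (ff2 y).IsHomogeneous 3 := by
    unfold ff2
    repeat' first | exact hp _ | refine IsHomogeneous.add ?_ ?_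
  have c3 : (ff3 y).IsHomogeneous 3 := by
    unfold ff3
    repeat' first | exact hy _ | refine IsHomogeneous.add ?_ ?_ | refine hm _ _ _ ?_ ?_
  have c4 : (ff4 y).IsHomogeneous 4 := by
    unfold ff4
    repeat' first | exact hy _ | refine IsHomogeneous.add ?_ ?_ | refine hm _ _ _ ?_ ?_
  have c6 : (ff6 y).IsHomogeneous 6 := by
    unfold ff6
    repeat' first | exact hy _ | refine IsHomogeneous.add ?_ ?_ | refine hm _ _ _ ?_ ?_
  have c7 : (ff7 y).IsHomogeneous 7 := by
    unfold ff7
    repeat' first | exact hy _ | refine hm _ _ _ ?_ ?_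
  fin_cases i
  exacts [c1, c2, c3, c4, c6, c7]

theorem yy_hom (i : Fin 7) : (yy i).IsHomogeneous 1 := by
  have hX : ∀ j : Fin 6, (X j : MvPolynomial (Fin 6) F2).IsHomogeneous 1 :=
    fun j => isHomogeneous_X _ _
  fin_cases i <;> simp only [yy] <;>
    repeat' first | exact hX _ | refine IsHomogeneous.add ?_ ?_

theorem ff_rad (j : Fin 6) :
    (X j : MvPolynomial (Fin 6) F2) ∈ (Ideal.span (Set.range (ff yy))).radical := by
  rw [Ideal.radical_eq_sInf, Ideal.mem_sInf]
  rintro P ⟨hP, hPp⟩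
  have hz : ∀ i, ff (fun j => Ideal.Quotient.mk P (yy j)) i = 0 := by
    intro i
    rw [← ff_map, Ideal.Quotient.eq_zero_iff_mem]
    exact hP (Ideal.subset_span ⟨i, rfl⟩)
  have h2 : (2 : MvPolynomial (Fin 6) F2 ⧸ P) = 0 := by
    have := congrArg (Ideal.Quotient.mk P) two_zero
    rwa [map_zero, map_ofNat] at this
  have hsum : yy 0 + yy 1 + yy 2 + yy 3 + yy 4 + yy 5 + yy 6 = 0 := by
    have h2 := two_zero
    simp [yy]
    grind
  have h := seven_zero h2 (fun j => Ideal.Quotient.mk P (yy j))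
    (by simp only [← map_add, hsum, map_zero]) (hz 0) (hz 1) (hz 2) (hz 3) (hz 4) (hz 5)
  have hy : ∀ i, yy i ∈ P := fun i => Ideal.Quotient.eq_zero_iff_mem.1 (h i)
  have h0 : X 0 ∈ P := hy 0
  have h1 : X 1 ∈ P := hy 1
  have h2 : X 2 ∈ P := hy 2
  have h3 : X 1 + X 2 + X 4 ∈ P := hy 3
  have h4 : X 0 + X 2 + X 5 ∈ P := hy 4
  have h5 : X 0 + X 1 + X 3 ∈ P := hy 5
  fin_cases j
  · exact h0
  · exact h1
  · exact h2
  · exact (Ideal.add_mem_iff_right P (P.add_mem h0 h1)).1 h5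
  · exact (Ideal.add_mem_iff_right P (P.add_mem h1 h2)).1 h3
  · exact (Ideal.add_mem_iff_right P (P.add_mem h0 h2)).1 h4

theorem degs_pos (i : Fin 6) : 0 < (![2, 3, 3, 4, 6, 7] : Fin 6 → ℕ) i := by
  fin_cases i <;> simp

theorem ff_algInd : AlgebraicIndependent F2 (ff yy) := by
  have : Module.Finite (Algebra.adjoin F2 (Set.range (ff yy))) (MvPolynomial (Fin 6) F2) :=
    graded_finite (ff yy) _ (ff_hom yy yy_hom) degs_pos
      (fun i => ⟨⟨_, Algebra.subset_adjoin ⟨i, rfl⟩⟩, rfl⟩) ff_rad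
  have hint : Algebra.IsIntegral (Algebra.adjoin F2 (Set.range (ff yy))) (MvPolynomial (Fin 6) F2) :=
    Algebra.IsIntegral.of_finite _ _
  have halg : Algebra.IsAlgebraic (Algebra.adjoin F2 (Set.range (ff yy))) (MvPolynomial (Fin 6) F2) :=
    hint.isAlgebraic
  refine (Algebra.IsAlgebraic.isTranscendenceBasis_of_le_trdeg_of_finite F2 (ff yy) ?_).1
  rw [MvPolynomial.trdeg_of_isDomain]
  simp

/-- The invariant ring `S[W'^*]^G` admits a homogeneous system of
parameters consisting of `6` algebraically independent homogeneous invariants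
`f₁, …, f₆` of degrees `2, 3, 3, 4, 6, 7` respectively, over whose generated polynomial
subalgebra `S[W'^*]^G` is a finitely generated module. -/
theorem stmt14 (D : G3 →* GL (Fin 6) F2)
    (hA : (D Agen : Matrix (Fin 6) (Fin 6) F2) = DA6)
    (hB : (D Bgen : Matrix (Fin 6) (Fin 6) F2) = DB6) :
    ∃ f : Fin 6 → (invG D),
      AlgebraicIndependent F2 f ∧
      (∀ i, (f i : MvPolynomial (Fin 6) F2).IsHomogeneous (![2, 3, 3, 4, 6, 7] i)) ∧
      Module.Finite (Algebra.adjoin F2 (Set.range f)) (invG D) := by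
  have hv : ∀ i, (invG D).val ((⟨ff yy i, ff_mem D hA hB i⟩ : invG D)) = ff yy i := fun _ => rfl
  refine ⟨fun i => ⟨ff yy i, ff_mem D hA hB i⟩, ?_, ff_hom yy yy_hom, ?_⟩
  · exact AlgebraicIndependent.of_comp (invG D).val ff_algInd
  · set f : Fin 6 → invG D := fun i => ⟨ff yy i, ff_mem D hA hB i⟩ with hf
    have h1 : Module.Finite (Algebra.adjoin F2 (Set.range f)) (MvPolynomial (Fin 6) F2) :=
      graded_finite (R := Algebra.adjoin F2 (Set.range f)) (ff yy) _ (ff_hom yy yy_hom) degs_pos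
        (fun i => ⟨⟨f i, Algebra.subset_adjoin ⟨i, rfl⟩⟩, rfl⟩) ff_rad
    have h2 : IsNoetherianRing (Algebra.adjoin F2 (Set.range f)) :=
      have hft : Algebra.FiniteType F2 (Algebra.adjoin F2 (Set.range f)) :=
        (Subalgebra.fg_iff_finiteType _).1 (Subalgebra.fg_def.2 ⟨_, Set.finite_range f, rfl⟩)
      Algebra.FiniteType.isNoetherianRing F2 (Algebra.adjoin F2 (Set.range f))
    have h3 : IsNoetherian (Algebra.adjoin F2 (Set.range f)) (MvPolynomial (Fin 6) F2) :=
      isNoetherian_of_isNoetherianRing_of_finite (Algebra.adjoin F2 (Set.range f))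
        (MvPolynomial (Fin 6) F2)
    let φ : invG D →ₗ[Algebra.adjoin F2 (Set.range f)] MvPolynomial (Fin 6) F2 :=
      { toFun := fun x => x
        map_add' := fun _ _ => rfl
        map_smul' := fun _ _ => rfl }
    exact Module.Finite.of_injective φ (fun x y h => Subtype.ext h)
end
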